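/- arXiv:2512.14966 — 2 statements merged into one kernel-verified Lean document; each statement's English description precedes it below -/
import Mathlib

section
/- Let X be a real Banach space and (e_i)_{i≥1} a normalized unconditional basis of X, and for each k ∈ ℕ let X_k = span{e_1,…,e_k}. Then (e_i) is equivalent to the canonical basis of c_0 (i.e., there is C ≥ 1 such that C^{-1}·max_i |a_i| ≤ ‖∑ a_i e_i‖ ≤ C·max_i |a_i| for all finitely supported scalars (a_i)) if and only if there exists a sequence (F_k : S_{ℓ∞^k} → S_{X_k})_{k≥1} of step preserving homeomorphisms that is equi-uniformly continuous. -/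
/-- The sup norm (`ℓ∞` norm) on `ℝ^k`. -/
noncomputable def supNorm {k : ℕ} (x : Fin k → ℝ) : ℝ := ⨆ i, |x i|

/-!
If `(e_i)` is equivalent to the basis of `c₀`, radial normalization of the synthesis map
`x ↦ ∑ x_i e_i` gives the homeomorphisms, uniformly Lipschitz in `k`.

Conversely, a vector of the unit sphere of `ℓ∞^k` is `δ`-close to one with at most `N = N(δ)`
distinct coordinates, so by step preservation and equi-uniform continuity every unit vector of
`X_k` is `ε`-close to one with at most `N` distinct coordinates. If the sums `∑_{i ∈ s} e_i` were
unbounded, one could choose disjoint blocks whose normalized indicators have geometrically decaying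
heights. A vector with at most `N` distinct coordinates can match at most `N` of these heights, and
some finite sum of the normalized indicators keeps half of its norm when any `N` of them are
deleted. Normalizing that sum gives a unit vector far from all vectors with at most `N` distinct
coordinates.
Bounded sums together with unconditionality give the equivalence with `c₀`.
-/

open Finset Function

lemma supNorm_eq_norm {k : ℕ} (x : Fin k → ℝ) : supNorm x = ‖x‖ := by
  refine le_antisymm (Real.iSup_le (norm_le_pi_norm x) (norm_nonneg x)) ?_
  exact (pi_norm_le_iff_of_nonneg (Real.iSup_nonneg fun i ↦ abs_nonneg (x i))).2 fun i ↦
    le_ciSup (f := fun i ↦ |x i|) (Set.finite_range _).bddAbove i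

section Normalization

variable {V X : Type*} [NormedAddCommGroup V] [NormedSpace ℝ V]
  [NormedAddCommGroup X] [NormedSpace ℝ X]

lemma norm_normalize_sub_normalize_le {u : X} (hu : u ≠ 0) (v : X) :
    ‖NormedSpace.normalize u - NormedSpace.normalize v‖ ≤ 2 * ‖u‖⁻¹ * ‖u - v‖ := by
  have norm_v : ‖NormedSpace.normalize v‖ ≤ 1 := by
    by_cases hv : v = 0
    · simp [hv]
    · exact (NormedSpace.norm_normalize hv).le
  have decomposition : NormedSpace.normalize u - NormedSpace.normalize v =
      ‖u‖⁻¹ • ((u - v) + (‖v‖ - ‖u‖) • NormedSpace.normalize v) := by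
    rw [sub_smul, NormedSpace.norm_smul_normalize, sub_add_sub_cancel, smul_sub,
      inv_smul_smul₀ (norm_ne_zero_iff.2 hu), NormedSpace.normalize]
  have norm_correction : ‖(‖v‖ - ‖u‖) • NormedSpace.normalize v‖ ≤ ‖u - v‖ := by
    rw [norm_smul, norm_sub_rev u v]
    exact mul_le_of_le_one_right (norm_nonneg _) norm_v |>.trans (abs_norm_sub_norm_le v u)
  calc ‖NormedSpace.normalize u - NormedSpace.normalize v‖
      = ‖u‖⁻¹ * ‖(u - v) + (‖v‖ - ‖u‖) • NormedSpace.normalize v‖ := by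
        rw [decomposition, norm_smul, norm_inv, norm_norm]
    _ ≤ ‖u‖⁻¹ * (‖u - v‖ + ‖u - v‖) := by
        gcongr
        exact norm_add_le_of_le le_rfl norm_correction
    _ = 2 * ‖u‖⁻¹ * ‖u - v‖ := by ring

lemma norm_normalize_map_sub_normalize_map_le (T : V →ₗ[ℝ] X) {c C : ℝ} (hc : 0 < c)
    (lower : ∀ x, c * ‖x‖ ≤ ‖T x‖) (upper : ∀ x, ‖T x‖ ≤ C * ‖x‖) {x : V} (hx : ‖x‖ = 1) (y : V) :
    ‖NormedSpace.normalize (T x) - NormedSpace.normalize (T y)‖ ≤ 2 * c⁻¹ * (C * ‖x - y‖) := by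
  have hcx : c ≤ ‖T x‖ := by simpa [hx] using lower x
  have hTx : T x ≠ 0 := norm_pos_iff.1 (hc.trans_le hcx)
  calc ‖NormedSpace.normalize (T x) - NormedSpace.normalize (T y)‖
      ≤ 2 * ‖T x‖⁻¹ * ‖T x - T y‖ := norm_normalize_sub_normalize_le hTx _
    _ ≤ 2 * c⁻¹ * (C * ‖x - y‖) := by
        rw [← map_sub]
        gcongr
        exact upper _

lemma bijOn_normalize_map_sphere {T : V →ₗ[ℝ] X} (hT : Injective T) :
    Set.BijOn (fun x ↦ NormedSpace.normalize (T x)) {x | ‖x‖ = 1} {y | y ∈ T.range ∧ ‖y‖ = 1} := by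
  have ne_zero_of_norm {x : V} (hx : ‖x‖ = 1) : x ≠ 0 := norm_ne_zero_iff.1 (by simp [hx])
  have map_ne_zero {x : V} (hx : ‖x‖ = 1) : T x ≠ 0 :=
    (map_ne_zero_iff T hT).2 (ne_zero_of_norm hx)
  refine ⟨fun x hx ↦ ⟨T.range.smul_mem _ ⟨x, rfl⟩,
    NormedSpace.norm_normalize (map_ne_zero hx)⟩, ?_, ?_⟩
  · intro x hx y hy hxy
    have same_direction : ‖T x‖⁻¹ • x = ‖T y‖⁻¹ • y :=
      hT (by simpa only [map_smul, NormedSpace.normalize] using hxy)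
    have normalize_smul_inv {z : V} (hz : ‖z‖ = 1) : NormedSpace.normalize (‖T z‖⁻¹ • z) = z := by
      rw [NormedSpace.normalize_smul_of_pos (inv_pos.2 (norm_pos_iff.2 (map_ne_zero hz))),
        NormedSpace.normalize_eq_self_of_norm_eq_one hz]
    rw [← normalize_smul_inv hx, same_direction, normalize_smul_inv hy]
  · rintro _ ⟨⟨z, rfl⟩, hz⟩
    have hz0 : z ≠ 0 := by
      rintro rfl
      simp at hz
    refine ⟨NormedSpace.normalize z, NormedSpace.norm_normalize hz0, ?_⟩
    have map_normalize : T (NormedSpace.normalize z) = ‖z‖⁻¹ • T z := map_smul T _ z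
    simp only [map_normalize]
    rw [NormedSpace.normalize_smul_of_pos (inv_pos.2 (norm_pos_iff.2 hz0)),
      NormedSpace.normalize_eq_self_of_norm_eq_one hz]

end Normalization

section FiniteSets

variable {ι κ : Type*}

lemma card_image_le_card_image_of_factorsThrough [Fintype ι] {α β : Type*} [DecidableEq α]
    [DecidableEq β] {g : ι → β} {f : ι → α} (h : g.FactorsThrough f) :
    #(univ.image g) ≤ #(univ.image f) := by
  refine card_le_card_of_forall_subsingleton (fun b a ↦ ∃ i, g i = b ∧ f i = a) ?_ ?_
  · simp
  · rintro a - _ ⟨-, i, rfl, hi⟩ _ ⟨-, j, rfl, hj⟩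
    exact h (hi.trans hj.symm)

/-- The intervals `(a_j / 2, 3 a_j / 2)` are disjoint, so a point is near at most one `a_j`. -/
lemma card_filter_near_le_card [LinearOrder κ] {a : κ → ℝ}
    (decay : ∀ {j l}, j < l → 3 * a l ≤ a j) (A : Finset κ) (V : Finset ℝ) :
    #{j ∈ A | ∃ v ∈ V, |v - a j| < a j / 2} ≤ #V := by
  have not_near_both {v : ℝ} {j l : κ} (hjl : j < l) (hj : |v - a j| < a j / 2)
      (hl : |v - a l| < a l / 2) : False := by
    linarith [decay hjl, (abs_lt.1 hj).1, (abs_lt.1 hl).2]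
  refine card_le_card_of_forall_subsingleton (fun j v ↦ |v - a j| < a j / 2)
    (fun j hj ↦ (mem_filter.1 hj).2) ?_
  rintro v - j ⟨-, hj⟩ l ⟨-, hl⟩
  rcases lt_trichotomy j l with h | h | h
  · exact (not_near_both h hj hl).elim
  · exact h
  · exact (not_near_both h hl hj).elim

lemma mul_two_pow_le_of_halving [DecidableEq κ] {g : Finset κ → ℝ} {c : ℝ} {N : ℕ}
    (lower : ∀ A : Finset κ, A.Nonempty → c ≤ g A)
    (halving : ∀ A : Finset κ, A.Nonempty → ∃ J ⊆ A, #J ≤ N ∧ 2 * g (A \ J) < g A) (r : ℕ) :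
    ∀ A : Finset κ, r * N < #A → c * 2 ^ r ≤ g A := by
  induction r with
  | zero => exact fun A hA ↦ by simpa using lower A (card_pos.1 (by simpa using hA))
  | succ r ih =>
    intro A hA
    obtain ⟨J, hJA, hJ, hlt⟩ := halving A (card_pos.1 (by omega))
    have := ih (A \ J) (by rw [card_sdiff_of_subset hJA]; rw [Nat.succ_mul] at hA; omega)
    rw [pow_succ]
    linarith

/-- If `N` points could always be deleted to halve `g`, then `g` would grow exponentially with the
cardinality. -/
lemma exists_forall_le_two_mul_sdiff [Infinite κ] [DecidableEq κ] {g : Finset κ → ℝ} {c : ℝ}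
    (hc : 0 < c) (lower : ∀ A : Finset κ, A.Nonempty → c ≤ g A) (upper : ∀ A, g A ≤ #A) (N : ℕ) :
    ∃ A : Finset κ, A.Nonempty ∧ ∀ J ⊆ A, #J ≤ N → g A ≤ 2 * g (A \ J) := by
  by_contra! halving
  have exponential_growth (r : ℕ) : c * 2 ^ r ≤ (r * N + 1 : ℕ) := by
    obtain ⟨A, -, hA⟩ := Set.infinite_univ.exists_subset_card_eq (α := κ) (r * N + 1)
    simpa only [hA] using
      (mul_two_pow_le_of_halving lower halving r A (by omega)).trans (upper A)
  have ratio_tendsto : Filter.Tendsto (fun r : ℕ ↦ (N + 1 : ℝ) * ((r : ℝ) ^ 1 / 2 ^ r))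
      Filter.atTop (nhds 0) := by
    simpa using (tendsto_pow_const_div_const_pow_of_one_lt 1 one_lt_two).const_mul (N + 1 : ℝ)
  obtain ⟨r, hr, hr1⟩ := ((ratio_tendsto.eventually (gt_mem_nhds hc)).and
    (Filter.eventually_ge_atTop 1)).exists
  have hgrowth := exponential_growth r
  push_cast at hgrowth
  rw [pow_one, ← mul_div_assoc, div_lt_iff₀ (by positivity)] at hr
  have : (1 : ℝ) ≤ r := by exact_mod_cast hr1
  linarith

end FiniteSets

section Approximation

/-- The endpoints `±1` are fixed so that rounding the coordinates of a vector of the unit sphere of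
`ℓ∞^k` stays on the sphere. -/
lemma exists_finset_rounding {δ : ℝ} (hδ : 0 < δ) :
    ∃ (V : Finset ℝ) (ρ : ℝ → ℝ), ∀ t, |t| ≤ 1 →
      ρ t ∈ V ∧ |ρ t| ≤ 1 ∧ |t - ρ t| ≤ δ ∧ (|t| = 1 → ρ t = t) := by
  classical
  obtain ⟨W, hW, W_finite, hcover⟩ :=
    (isCompact_Icc (a := (-1 : ℝ)) (b := 1)).finite_cover_balls hδ
  have exists_near (t : ℝ) (ht : |t| ≤ 1) : ∃ v ∈ insert 1 (insert (-1) W_finite.toFinset),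
      |v| ≤ 1 ∧ |t - v| ≤ δ ∧ (|t| = 1 → v = t) := by
    by_cases ht1 : |t| = 1
    · exact ⟨t, by rcases eq_or_eq_neg_of_abs_eq ht1 with rfl | rfl <;> simp, ht,
        by simpa using hδ.le, fun _ ↦ rfl⟩
    · obtain ⟨v, hvW, hv⟩ := Set.mem_iUnion₂.1 (hcover (abs_le.1 ht))
      exact ⟨v, by simp [hvW], abs_le.2 (hW hvW), (Metric.mem_ball.1 hv).le,
        fun h ↦ (ht1 h).elim⟩
  choose! ρ hρ using exists_near
  exact ⟨_, ρ, hρ⟩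

lemma exists_abs_eq_norm {ι : Type*} [Fintype ι] {x : ι → ℝ} (hx : 0 < ‖x‖) :
    ∃ i, |x i| = ‖x‖ := by
  by_contra! h
  exact lt_irrefl _ <| (pi_norm_lt_iff hx).2 fun i ↦ (norm_le_pi_norm x i).lt_of_ne (h i)

lemma exists_card_image_le_norm_sub_le {δ : ℝ} (hδ : 0 < δ) :
    ∃ N : ℕ, ∀ {ι : Type*} [Fintype ι] (x : ι → ℝ), ‖x‖ = 1 →
      ∃ x' : ι → ℝ, ‖x'‖ = 1 ∧ ‖x - x'‖ ≤ δ ∧ #(univ.image x') ≤ N := by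
  obtain ⟨V, ρ, hρ⟩ := exists_finset_rounding hδ
  refine ⟨#V, fun {ι} _ x hx ↦ ⟨ρ ∘ x, ?_, ?_, ?_⟩⟩
  all_goals have abs_coord_le (i : ι) : |x i| ≤ 1 := hx ▸ norm_le_pi_norm x i
  · obtain ⟨i, hi⟩ := exists_abs_eq_norm (x := x) (by simp [hx])
    refine le_antisymm
      ((pi_norm_le_iff_of_nonneg zero_le_one).2 fun j ↦ (hρ _ (abs_coord_le j)).2.1) ?_
    calc (1 : ℝ) = |ρ (x i)| := by rw [(hρ _ (abs_coord_le i)).2.2.2 (hi.trans hx), hi, hx]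
      _ ≤ ‖ρ ∘ x‖ := norm_le_pi_norm (ρ ∘ x) i
  · exact (pi_norm_le_iff_of_nonneg hδ.le).2 fun i ↦ (hρ _ (abs_coord_le i)).2.2.1
  · exact card_le_card (image_subset_iff.2 fun i _ ↦ (hρ _ (abs_coord_le i)).1)

end Approximation

section DisjointBlocks

variable {ι X : Type*} [SeminormedAddCommGroup X] {e : ι → X}

lemma norm_sum_le_card (he : ∀ i, ‖e i‖ ≤ 1) (s : Finset ι) : ‖∑ i ∈ s, e i‖ ≤ #s := by
  simpa using norm_sum_le_of_le s fun i _ ↦ he i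

lemma exists_disjoint_three_mul_card_lt (he : ∀ i, ‖e i‖ ≤ 1)
    (unbounded : ∀ D, ∃ s : Finset ι, D < ‖∑ i ∈ s, e i‖) (U : Finset ι) :
    ∃ B : Finset ι, Disjoint B U ∧ 3 * (#U : ℝ) < ‖∑ i ∈ B, e i‖ := by
  classical
  obtain ⟨s, hs⟩ := unbounded (4 * #U)
  refine ⟨s \ U, sdiff_disjoint, ?_⟩
  have inter_le : ‖∑ i ∈ s ∩ U, e i‖ ≤ #U :=
    (norm_sum_le_card he _).trans (by gcongr; exact inter_subset_right)
  rw [← sum_inter_add_sum_sdiff s U] at hs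
  linarith [norm_add_le (∑ i ∈ s ∩ U, e i) (∑ i ∈ s \ U, e i)]

lemma exists_disjoint_blocks (he : ∀ i, ‖e i‖ ≤ 1)
    (unbounded : ∀ D, ∃ s : Finset ι, D < ‖∑ i ∈ s, e i‖) :
    ∃ B : ℕ → Finset ι, Pairwise (Disjoint on B) ∧ (∀ j, 0 < ‖∑ i ∈ B j, e i‖) ∧
      ∀ {j l}, j < l → 3 * ‖∑ i ∈ B j, e i‖ ≤ ‖∑ i ∈ B l, e i‖ := by
  classical
  choose next next_disjoint lt_norm_next using exists_disjoint_three_mul_card_lt he unbounded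
  let U (j : ℕ) : Finset ι := (fun W ↦ W ∪ next W)^[j] ∅
  have U_succ (j : ℕ) : U (j + 1) = U j ∪ next (U j) := iterate_succ_apply' _ _ _
  have U_mono : Monotone U := monotone_nat_of_le_succ fun j ↦ U_succ j ▸ subset_union_left
  have next_subset {j l : ℕ} (hjl : j < l) : next (U j) ⊆ U l :=
    (U_succ j ▸ subset_union_right).trans (U_mono hjl)
  refine ⟨fun j ↦ next (U j), (pairwise_disjoint_on _).2 fun j l hjl ↦ ?_, fun j ↦ ?_,
    fun {j l} hjl ↦ ?_⟩
  · exact ((next_disjoint (U l)).mono_right (next_subset hjl)).symm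
  · exact (by positivity : (0 : ℝ) ≤ 3 * #(U j)).trans_lt (lt_norm_next _)
  · calc 3 * ‖∑ i ∈ next (U j), e i‖ ≤ 3 * #(next (U j)) := by gcongr; exact norm_sum_le_card he _
      _ ≤ 3 * #(U l) := by gcongr; exact next_subset hjl
      _ ≤ ‖∑ i ∈ next (U l), e i‖ := (lt_norm_next _).le

end DisjointBlocks

section Families

variable {ι X : Type*} [SeminormedAddCommGroup X] [NormedSpace ℝ X]

/-- The family `e` is unconditional with constant `K`: shrinking the absolute values of the
coefficients of a finite sum multiplies its norm by at most `K`. -/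
def IsUnconditionalWith (K : ℝ) (e : ι → X) : Prop :=
  ∀ (s : Finset ι) (a b : ι → ℝ), (∀ i ∈ s, |a i| ≤ |b i|) →
    ‖∑ i ∈ s, a i • e i‖ ≤ K * ‖∑ i ∈ s, b i • e i‖

/-- The family `e` is equivalent, with constant `C`, to the canonical basis of `c₀(ι)`. -/
def IsC0EquivalentWith (C : ℝ) (e : ι → X) : Prop :=
  ∀ (s : Finset ι) (hs : s.Nonempty) (a : ι → ℝ),
    C⁻¹ * s.sup' hs (fun i ↦ |a i|) ≤ ‖∑ i ∈ s, a i • e i‖ ∧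
    ‖∑ i ∈ s, a i • e i‖ ≤ C * s.sup' hs (fun i ↦ |a i|)

variable {e : ι → X} {K C D : ℝ}

namespace IsUnconditionalWith

lemma one_le (hK : IsUnconditionalWith K e) {s : Finset ι} {a : ι → ℝ}
    (h : 0 < ‖∑ i ∈ s, a i • e i‖) : 1 ≤ K :=
  (le_mul_iff_one_le_left h).1 (hK s a a fun _ _ ↦ le_rfl)

lemma norm_sum_le_of_subset (hK : IsUnconditionalWith K e) {s t : Finset ι} (hst : s ⊆ t)
    {a b : ι → ℝ} (hab : ∀ i ∈ s, |a i| ≤ |b i|) :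
    ‖∑ i ∈ s, a i • e i‖ ≤ K * ‖∑ i ∈ t, b i • e i‖ := by
  classical
  have h := hK t (fun i ↦ if i ∈ s then a i else 0) b fun i _ ↦ by
    split_ifs with hi
    · exact hab i hi
    · simp
  simpa only [ite_smul, zero_smul, sum_ite_mem, inter_eq_right.2 hst] using h

lemma isC0EquivalentWith (hK : IsUnconditionalWith K e) (hnorm : ∀ i, ‖e i‖ = 1)
    (hD : ∀ s : Finset ι, ‖∑ i ∈ s, e i‖ ≤ D) : IsC0EquivalentWith (max K (K * D)) e := by
  intro s hs a
  set M := s.sup' hs fun i ↦ |a i|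
  have abs_le_M {i : ι} (hi : i ∈ s) : |a i| ≤ M := le_sup' (fun i ↦ |a i|) hi
  obtain ⟨i₀, hi₀⟩ := hs
  have hM : 0 ≤ M := (abs_nonneg _).trans (abs_le_M hi₀)
  have hK0 : 0 < K := zero_lt_one.trans_le <| hK.one_le (s := {i₀}) (a := 1) (by simp [hnorm])
  constructor
  · have M_le : M ≤ K * ‖∑ i ∈ s, a i • e i‖ := sup'_le _ _ fun i hi ↦ by
      simpa [norm_smul, hnorm] using
        hK.norm_sum_le_of_subset (singleton_subset_iff.2 hi) (a := a) fun _ _ ↦ le_rfl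
    rw [inv_mul_le_iff₀ (lt_max_of_lt_left hK0)]
    exact M_le.trans (by gcongr; exact le_max_left _ _)
  · calc ‖∑ i ∈ s, a i • e i‖ ≤ K * ‖∑ i ∈ s, M • e i‖ :=
          hK s a (fun _ ↦ M) fun i hi ↦ (abs_le_M hi).trans (le_abs_self M)
      _ = K * (M * ‖∑ i ∈ s, e i‖) := by rw [← smul_sum, norm_smul, Real.norm_of_nonneg hM]
      _ ≤ K * (M * D) := by gcongr; exact hD s
      _ = K * D * M := by ring
      _ ≤ max K (K * D) * M := by gcongr; exact le_max_right _ _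

end IsUnconditionalWith

lemma sup'_abs_univ_eq_norm {κ : Type*} [Fintype κ] [Nonempty κ] (x : κ → ℝ) :
    univ.sup' univ_nonempty (fun i ↦ |x i|) = ‖x‖ :=
  le_antisymm (sup'_le _ _ fun i _ ↦ norm_le_pi_norm x i)
    ((pi_norm_le_iff_of_nonempty x).2 fun i ↦ le_sup' (fun i ↦ |x i|) (mem_univ i))

lemma IsC0EquivalentWith.norm_bounds (hC : IsC0EquivalentWith C e) {κ : Type*} [Fintype κ]
    (f : κ ↪ ι) (x : κ → ℝ) :
    C⁻¹ * ‖x‖ ≤ ‖∑ i, x i • e (f i)‖ ∧ ‖∑ i, x i • e (f i)‖ ≤ C * ‖x‖ := by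
  rcases isEmpty_or_nonempty κ with _ | _
  · simp [Subsingleton.elim x 0]
  · have h := hC (univ.map f) (univ_nonempty.map) (extend f x 0)
    simpa only [sum_map, sup'_map, comp_def, f.injective.extend_apply,
      sup'_abs_univ_eq_norm] using h

/-- Disjoint blocks, with normalized multiples `height j • 1_{block j}` of their indicators whose
heights decay geometrically. The common coefficient family `coeff` encodes all these vectors at
once; the blocks are disjoint because `coeff` takes different values on them. -/
structure LacunaryBlocks (e : ι → X) where
  block : ℕ → Finset ι
  height : ℕ → ℝ
  coeff : ι → ℝ
  coeff_eq : ∀ {j i}, i ∈ block j → coeff i = height j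
  height_pos : ∀ j, 0 < height j
  three_mul_height_le : ∀ {j l}, j < l → 3 * height l ≤ height j
  norm_sum_block : ∀ j, ‖∑ i ∈ block j, coeff i • e i‖ = 1

lemma nonempty_lacunaryBlocks (he : ∀ i, ‖e i‖ ≤ 1)
    (unbounded : ∀ D, ∃ s : Finset ι, D < ‖∑ i ∈ s, e i‖) : Nonempty (LacunaryBlocks e) := by
  obtain ⟨B, disjoint, pos, growth⟩ := exists_disjoint_blocks he unbounded
  have exists_index (i : ι) : ∃ j, ∀ l, i ∈ B l → l = j := by
    by_cases h : ∃ j, i ∈ B j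
    · obtain ⟨j, hj⟩ := h
      exact ⟨j, fun l hl ↦ disjoint.eq (not_disjoint_iff.2 ⟨i, hl, hj⟩)⟩
    · exact ⟨0, fun l hl ↦ (h ⟨l, hl⟩).elim⟩
  choose index index_eq using exists_index
  have coeff_eq {j : ℕ} {i : ι} (hi : i ∈ B j) :
      ‖∑ i ∈ B (index i), e i‖⁻¹ = ‖∑ i ∈ B j, e i‖⁻¹ := by rw [index_eq i j hi]
  refine ⟨{
    block := B
    height := fun j ↦ ‖∑ i ∈ B j, e i‖⁻¹
    coeff := fun i ↦ ‖∑ i ∈ B (index i), e i‖⁻¹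
    coeff_eq := coeff_eq
    height_pos := fun j ↦ inv_pos.2 (pos j)
    three_mul_height_le := fun {j l} hjl ↦ ?_
    norm_sum_block := fun j ↦ ?_ }⟩
  · rw [← div_eq_mul_inv, div_le_iff₀ (pos l), inv_mul_eq_div, le_div_iff₀ (pos j)]
    exact growth hjl
  · rw [sum_congr rfl fun i hi ↦ by rw [coeff_eq hi], ← smul_sum, norm_smul, norm_inv, norm_norm,
      inv_mul_cancel₀ (pos j).ne']

namespace LacunaryBlocks

lemma one_le_of_isUnconditionalWith (b : LacunaryBlocks e) (hK : IsUnconditionalWith K e) : 1 ≤ K :=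
  hK.one_le (a := b.coeff) (s := b.block 0) (by simp [b.norm_sum_block])

variable (b : LacunaryBlocks e)

lemma disjoint_block : Pairwise (Disjoint on b.block) := by
  refine (pairwise_disjoint_on _).2 fun j l hjl ↦ disjoint_left.2 fun i hij hil ↦ ?_
  linarith [b.three_mul_height_le hjl, b.height_pos l, b.coeff_eq hij, b.coeff_eq hil]

variable [DecidableEq ι]

/-- The sum of the normalized block vectors with indices in `A`. -/
def blockSum (A : Finset ℕ) : X := ∑ i ∈ A.biUnion b.block, b.coeff i • e i

lemma norm_blockSum_le_card (A : Finset ℕ) : ‖b.blockSum A‖ ≤ #A := by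
  rw [blockSum, sum_biUnion (b.disjoint_block.set_pairwise _)]
  simpa using norm_sum_le_of_le A fun j _ ↦ (b.norm_sum_block j).le

lemma inv_le_norm_blockSum (hK : IsUnconditionalWith K e) {A : Finset ℕ} (hA : A.Nonempty) :
    K⁻¹ ≤ ‖b.blockSum A‖ := by
  obtain ⟨j, hj⟩ := hA
  have h := hK.norm_sum_le_of_subset (subset_biUnion_of_mem b.block hj) (a := b.coeff)
    fun _ _ ↦ le_rfl
  rw [b.norm_sum_block] at h
  exact (inv_le_iff_one_le_mul₀' (by linarith [b.one_le_of_isUnconditionalWith hK])).2 h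

/-- The indices of those blocks in `A` whose height is approximated by an element of `V`. -/
noncomputable def nearIndices (A : Finset ℕ) (V : Finset ℝ) : Finset ℕ :=
  {j ∈ A | ∃ v ∈ V, |v - b.height j| < b.height j / 2}

/-- Off the near blocks, `z` differs from the coefficient of `blockSum A` by at least half of that
coefficient. -/
lemma norm_blockSum_sdiff_nearIndices_le (hK : IsUnconditionalWith K e) {A : Finset ℕ}
    {u : Finset ι} (hAu : A.biUnion b.block ⊆ u) (z : ι → ℝ) :
    ‖b.blockSum (A \ b.nearIndices A (u.image z))‖ ≤
      2 * K * ‖b.blockSum A - ∑ i ∈ u, z i • e i‖ := by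
  set J := b.nearIndices A (u.image z)
  let w (i : ι) : ℝ := if i ∈ A.biUnion b.block then b.coeff i else 0
  have blockSum_eq : b.blockSum A = ∑ i ∈ u, w i • e i := by
    simp only [w, ite_smul, zero_smul, sum_ite_mem, inter_eq_right.2 hAu, blockSum]
  have half_coeff_le : ∀ i ∈ (A \ J).biUnion b.block, |2⁻¹ * b.coeff i| ≤ |w i - z i| := by
    intro i hi
    obtain ⟨j, hj, hij⟩ := mem_biUnion.1 hi
    obtain ⟨hjA, hjJ⟩ := mem_sdiff.1 hj
    have hw : w i = b.height j :=
      (if_pos (mem_biUnion.2 ⟨j, hjA, hij⟩)).trans (b.coeff_eq hij)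
    have hiu : z i ∈ u.image z := mem_image_of_mem z (hAu (mem_biUnion.2 ⟨j, hjA, hij⟩))
    have far : b.height j / 2 ≤ |z i - b.height j| :=
      not_lt.1 fun h ↦ hjJ (mem_filter.2 ⟨hjA, z i, hiu, h⟩)
    rwa [hw, b.coeff_eq hij, abs_sub_comm, inv_mul_eq_div, abs_of_pos (half_pos (b.height_pos j))]
  have hsub : (A \ J).biUnion b.block ⊆ u :=
    (biUnion_subset_biUnion_of_subset_left _ sdiff_subset).trans hAu
  have h := hK.norm_sum_le_of_subset hsub half_coeff_le
  simp only [mul_smul, ← smul_sum, sub_smul, sum_sub_distrib, ← blockSum_eq] at h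
  rw [norm_smul, ← blockSum] at h
  norm_num at h
  linarith

/-- Deleting the near blocks, of which there are at most `N`, keeps half of the norm. -/
lemma exists_norm_blockSum_le (hK : IsUnconditionalWith K e) (N : ℕ) :
    ∃ A : Finset ℕ, 0 < ‖b.blockSum A‖ ∧ ∀ u, A.biUnion b.block ⊆ u → ∀ z : ι → ℝ,
      #(u.image z) ≤ N → ‖b.blockSum A‖ ≤ 4 * K * ‖b.blockSum A - ∑ i ∈ u, z i • e i‖ := by
  have K_inv_pos : 0 < K⁻¹ :=
    inv_pos.2 (zero_lt_one.trans_le (b.one_le_of_isUnconditionalWith hK))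
  obtain ⟨A, A_nonempty, hA⟩ := exists_forall_le_two_mul_sdiff K_inv_pos
    (fun _ ↦ b.inv_le_norm_blockSum hK) b.norm_blockSum_le_card N
  refine ⟨A, K_inv_pos.trans_le (b.inv_le_norm_blockSum hK A_nonempty), fun u hAu z hz ↦ ?_⟩
  have card_near : #(b.nearIndices A (u.image z)) ≤ N :=
    (card_filter_near_le_card b.three_mul_height_le A _).trans hz
  linarith [hA (b.nearIndices A (u.image z)) (filter_subset _ _) card_near,
    b.norm_blockSum_sdiff_nearIndices_le hK hAu z]

end LacunaryBlocks

lemma exists_unit_vector_far_from_steps (hK : IsUnconditionalWith K e)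
    (he : ∀ i, ‖e i‖ ≤ 1) (unbounded : ∀ D, ∃ s : Finset ι, D < ‖∑ i ∈ s, e i‖) (N : ℕ) :
    ∃ (t : Finset ι) (y : X), y ∈ Submodule.span ℝ (e '' t) ∧ ‖y‖ = 1 ∧
      ∀ u, t ⊆ u → ∀ z : ι → ℝ, #(u.image z) ≤ N → (4 * K)⁻¹ ≤ ‖y - ∑ i ∈ u, z i • e i‖ := by
  classical
  obtain ⟨b⟩ := nonempty_lacunaryBlocks he unbounded
  obtain ⟨A, hR, hA⟩ := b.exists_norm_blockSum_le hK N
  set R := ‖b.blockSum A‖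
  refine ⟨A.biUnion b.block, R⁻¹ • b.blockSum A, ?_, ?_, fun u hAu z hz ↦ ?_⟩
  · exact Submodule.smul_mem _ _ <| Submodule.sum_mem _ fun i hi ↦
      Submodule.smul_mem _ _ (Submodule.subset_span ⟨i, hi, rfl⟩)
  · rw [norm_smul, norm_inv, norm_norm, inv_mul_cancel₀ hR.ne']
  · have card_image : #(u.image fun i ↦ R * z i) ≤ N := by
      rw [← comp_def, ← image_image]
      exact card_image_le.trans hz
    have rescale : b.blockSum A - ∑ i ∈ u, (R * z i) • e i =
        R • (R⁻¹ • b.blockSum A - ∑ i ∈ u, z i • e i) := by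
      simp only [mul_smul, ← smul_sum, smul_sub, smul_inv_smul₀ hR.ne']
    have h := hA u hAu _ card_image
    have K_pos : 0 < K := zero_lt_one.trans_le (b.one_le_of_isUnconditionalWith hK)
    rw [rescale, norm_smul, Real.norm_of_nonneg hR.le] at h
    rw [inv_le_iff_one_le_mul₀' (by positivity)]
    exact le_of_mul_le_mul_left (by linarith) hR

end Families

section Sequences

lemma range_linearCombination_val {X : Type*} [AddCommGroup X] [Module ℝ X] (e : ℕ → X) (k : ℕ) :
    (Fintype.linearCombination ℝ fun i : Fin k ↦ e i).range =
      Submodule.span ℝ (e '' Set.Iio k) := by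
  rw [Fintype.range_linearCombination, ← Fin.range_val, ← Set.range_comp, comp_def]

lemma IsC0EquivalentWith.exists_stepPreserving {X : Type*} [NormedAddCommGroup X]
    [NormedSpace ℝ X] {e : ℕ → X} {C : ℝ} (hC : IsC0EquivalentWith C e) (C_pos : 0 < C) :
    ∃ F : (k : ℕ) → (Fin k → ℝ) → (Fin k → ℝ),
      (∀ k x, (F k x).FactorsThrough x) ∧
      (∀ k, ContinuousOn (fun x ↦ ∑ i, F k x i • e i) {x | ‖x‖ = 1}) ∧
      (∀ k, Set.BijOn (fun x ↦ ∑ i, F k x i • e i) {x | ‖x‖ = 1}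
        {y | y ∈ Submodule.span ℝ (e '' Set.Iio k) ∧ ‖y‖ = 1}) ∧
      ∀ k x y, ‖x‖ = 1 →
        ‖∑ i, F k x i • e i - ∑ i, F k y i • e i‖ ≤ 2 * C * (C * ‖x - y‖) := by
  let T (k : ℕ) : (Fin k → ℝ) →ₗ[ℝ] X := Fintype.linearCombination ℝ fun i : Fin k ↦ e i
  have lower (k : ℕ) (x : Fin k → ℝ) : C⁻¹ * ‖x‖ ≤ ‖T k x‖ :=
    (hC.norm_bounds Fin.valEmbedding x).1
  have upper (k : ℕ) (x : Fin k → ℝ) : ‖T k x‖ ≤ C * ‖x‖ :=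
    (hC.norm_bounds Fin.valEmbedding x).2
  have injective (k : ℕ) : Injective (T k) := (injective_iff_map_eq_zero _).2 fun x hx ↦ by
    have h := lower k x
    rw [hx, norm_zero] at h
    exact norm_le_zero_iff.1 (nonpos_of_mul_nonpos_right h (inv_pos.2 C_pos))
  have sum_eq (k : ℕ) (x : Fin k → ℝ) :
      ∑ i, (‖T k x‖⁻¹ • x) i • e i = NormedSpace.normalize (T k x) := map_smul (T k) _ x
  have lipschitz (k : ℕ) (x y : Fin k → ℝ) (hx : ‖x‖ = 1) :
      ‖NormedSpace.normalize (T k x) - NormedSpace.normalize (T k y)‖ ≤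
        2 * C * (C * ‖x - y‖) := by
    simpa only [inv_inv] using norm_normalize_map_sub_normalize_map_le (T k) (inv_pos.2 C_pos)
      (lower k) (upper k) hx y
  refine ⟨fun k x ↦ ‖T k x‖⁻¹ • x, fun k x i j hij ↦ ?_, fun k ↦ ?_, fun k ↦ ?_, ?_⟩
  · simp only [Pi.smul_apply, hij]
  · simp only [sum_eq]
    refine (LipschitzOnWith.of_dist_le_mul (K := (2 * C * C).toNNReal)
      fun x hx y _ ↦ ?_).continuousOn
    rw [dist_eq_norm, dist_eq_norm, Real.coe_toNNReal _ (by positivity), mul_assoc _ C]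
    exact lipschitz k x y hx
  · simp only [sum_eq]
    exact range_linearCombination_val e k ▸ bijOn_normalize_map_sphere (injective k)
  · simpa only [sum_eq] using lipschitz

lemma exists_norm_sum_le_of_stepPreserving {X : Type*} [SeminormedAddCommGroup X]
    [NormedSpace ℝ X] {e : ℕ → X} {K δ ε : ℝ} (he : ∀ i, ‖e i‖ ≤ 1)
    (hK : IsUnconditionalWith K e) (hδ : 0 < δ) (hε : ε < (4 * K)⁻¹)
    {F : (k : ℕ) → (Fin k → ℝ) → (Fin k → ℝ)}
    (step : ∀ k x, ‖x‖ = 1 → (F k x).FactorsThrough x)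
    (surj : ∀ k, Set.SurjOn (fun x ↦ ∑ i, F k x i • e i) {x | ‖x‖ = 1}
      {y | y ∈ Submodule.span ℝ (e '' Set.Iio k) ∧ ‖y‖ = 1})
    (unif : ∀ k x y, ‖x‖ = 1 → ‖y‖ = 1 → ‖x - y‖ ≤ δ →
      ‖∑ i, F k x i • e i - ∑ i, F k y i • e i‖ ≤ ε) :
    ∃ D, ∀ s : Finset ℕ, ‖∑ i ∈ s, e i‖ ≤ D := by
  by_contra! unbounded
  obtain ⟨N, hN⟩ := exists_card_image_le_norm_sub_le hδ
  obtain ⟨t, y, hyt, hy, far⟩ := exists_unit_vector_far_from_steps hK he unbounded N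
  obtain ⟨k, htk⟩ := t.exists_nat_subset_range
  have hyk : y ∈ Submodule.span ℝ (e '' Set.Iio k) :=
    Submodule.span_mono (Set.image_mono fun i hi ↦ mem_range.1 (htk hi)) hyt
  obtain ⟨x, hx, rfl⟩ := surj k ⟨hyk, hy⟩
  obtain ⟨x', hx', close, hcard⟩ := hN x hx
  have range_eq : range k = (univ : Finset (Fin k)).map Fin.valEmbedding := by
    rw [Fin.map_valEmbedding_univ, Nat.Iio_eq_range]
  set z : ℕ → ℝ := extend Fin.val (F k x') 0
  have z_comp : z ∘ Fin.val = F k x' := funext fun i ↦ Fin.val_injective.extend_apply _ _ i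
  have card_z : #((range k).image z) ≤ N := by
    rw [range_eq, map_eq_image, image_image]
    exact z_comp ▸ (card_image_le_card_image_of_factorsThrough (step k x' hx')).trans hcard
  have sum_z : ∑ i ∈ range k, z i • e i = ∑ i, F k x' i • e i := by
    rw [sum_range]
    exact sum_congr rfl fun i _ ↦ by rw [← congrFun z_comp i, comp_apply]
  have hfar := far (range k) htk z card_z
  rw [sum_z] at hfar
  exact hε.not_ge (hfar.trans (unif k x x' hx hx' close))

end Sequences

theorem stmt_16_general {X : Type*} [NormedAddCommGroup X] [NormedSpace ℝ X] {e : ℕ → X} {K : ℝ}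
    (hnorm : ∀ i, ‖e i‖ = 1) (hK : IsUnconditionalWith K e) :
    (∃ C, 1 ≤ C ∧ IsC0EquivalentWith C e) ↔
    ∃ F : (k : ℕ) → (Fin k → ℝ) → (Fin k → ℝ),
      (∀ k x, ‖x‖ = 1 → ∀ i j, x i = x j → F k x i = F k x j) ∧
      (∀ k, ContinuousOn (fun x ↦ ∑ i, F k x i • e i) {x | ‖x‖ = 1}) ∧
      (∀ k, Set.BijOn (fun x ↦ ∑ i, F k x i • e i) {x | ‖x‖ = 1}
        {y | y ∈ Submodule.span ℝ (e '' Set.Iio k) ∧ ‖y‖ = 1}) ∧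
      ∀ ε, 0 < ε → ∃ δ, 0 < δ ∧ ∀ k x y, ‖x‖ = 1 → ‖y‖ = 1 → ‖x - y‖ ≤ δ →
        ‖∑ i, F k x i • e i - ∑ i, F k y i • e i‖ ≤ ε := by
  have one_le_K : 1 ≤ K := hK.one_le (s := {0}) (a := 1) (by simp [hnorm])
  constructor
  · rintro ⟨C, one_le_C, hC⟩
    have C_pos : 0 < C := zero_lt_one.trans_le one_le_C
    obtain ⟨F, step, continuous, bij, lipschitz⟩ := hC.exists_stepPreserving C_pos
    refine ⟨F, fun k x _ i j hij ↦ step k x hij, continuous, bij, fun ε hε ↦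
      ⟨ε / (2 * C * C), by positivity, fun k x y hx _ hxy ↦ (lipschitz k x y hx).trans ?_⟩⟩
    rw [← mul_assoc]
    exact (le_div_iff₀' (by positivity)).1 hxy
  · rintro ⟨F, step, -, bij, unif⟩
    obtain ⟨ε, hε, ε_lt⟩ := exists_between (show 0 < (4 * K)⁻¹ by positivity)
    obtain ⟨δ, hδ, close⟩ := unif ε hε
    obtain ⟨D, hD⟩ := exists_norm_sum_le_of_stepPreserving (fun i ↦ (hnorm i).le) hK hδ ε_lt
      (fun k x hx i j ↦ step k x hx i j) (fun k ↦ (bij k).surjOn) close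
    exact ⟨_, le_max_of_le_left one_le_K, hK.isC0EquivalentWith hnorm hD⟩

/-- Corollary 5.4 of the paper: a normalized unconditional basis `(e_i)` of
a Banach space `X` is equivalent to the canonical basis of `c_0` if and only if there is an
equi-uniformly continuous sequence of step preserving homeomorphisms
`F_k : S_{ℓ∞^k} → S_{X_k}`. Here the sequence is 0-indexed, `X_k = span{e_0,…,e_{k-1}}`,
and each `F_k` is encoded by its coordinate functions, `F_k x = ∑_{i<k} (F k x) i • e i`. -/
theorem stmt_16 {X : Type*} [NormedAddCommGroup X] [NormedSpace ℝ X] [CompleteSpace X]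
    (e : ℕ → X)
    (hnorm : ∀ i, ‖e i‖ = 1)
    (hbasis : ∀ x : X, ∃! a : ℕ → ℝ,
      Filter.Tendsto (fun n => ∑ i ∈ Finset.range n, a i • e i) Filter.atTop (nhds x))
    (huncond : ∃ K : ℝ, 1 ≤ K ∧ ∀ (s : Finset ℕ) (a b : ℕ → ℝ),
      (∀ i ∈ s, |a i| ≤ |b i|) → ‖∑ i ∈ s, a i • e i‖ ≤ K * ‖∑ i ∈ s, b i • e i‖) :
    (∃ C : ℝ, 1 ≤ C ∧ ∀ (s : Finset ℕ) (hs : s.Nonempty) (a : ℕ → ℝ),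
      C⁻¹ * s.sup' hs (fun i => |a i|) ≤ ‖∑ i ∈ s, a i • e i‖ ∧
      ‖∑ i ∈ s, a i • e i‖ ≤ C * s.sup' hs (fun i => |a i|)) ↔
    (∃ F : (k : ℕ) → (Fin k → ℝ) → (Fin k → ℝ),
      -- each `F_k` is step preserving,
      (∀ k, ∀ x : Fin k → ℝ, supNorm x = 1 → ∀ i j, x i = x j → F k x i = F k x j) ∧
      -- each `F_k` is continuous on the sphere,
      (∀ k, ContinuousOn (fun x : Fin k → ℝ => ∑ i : Fin k, F k x i • e (i : ℕ))
        {x : Fin k → ℝ | supNorm x = 1}) ∧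
      -- each `F_k` is a bijection from `S_{ℓ∞^k}` onto `S_{X_k}`,
      (∀ k, Set.BijOn (fun x : Fin k → ℝ => ∑ i : Fin k, F k x i • e (i : ℕ))
        {x : Fin k → ℝ | supNorm x = 1}
        {y : X | y ∈ Submodule.span ℝ (e '' Set.Iio k) ∧ ‖y‖ = 1}) ∧
      -- the sequence `(F_k)` is equi-uniformly continuous:
      (∀ ε : ℝ, 0 < ε → ∃ δ : ℝ, 0 < δ ∧ ∀ k, ∀ x y : Fin k → ℝ,
        supNorm x = 1 → supNorm y = 1 → supNorm (x - y) ≤ δ →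
        ‖(∑ i : Fin k, F k x i • e (i : ℕ)) - ∑ i : Fin k, F k y i • e (i : ℕ)‖ ≤ ε)) := by
  obtain ⟨K, -, hK⟩ := huncond
  simpa only [supNorm_eq_norm] using! stmt_16_general hnorm hK
end

section
/- Fix d ∈ ℕ with d ≥ 1, 0 < ε ≤ 1, and 1 ≤ q ≤ p < ∞. Let X be a real normed space and (e_i)_{i≥1} a normalized 1-unconditional sequence in X satisfying lower p and upper q estimates on block sequences with constant one. Let P ⊆ ℕ and M = {k_1 < k_2 < …} ⊆ ℕ satisfy Assumption A(d, ε/4), and set Q = {k_{2j} : j ≥ 1}. Then for all m̄ = (m_1 < … < m_d) with m_1,…,m_d ∈ Q, all k ∈ Q with k > m_d, and all step preserving maps F : S⁺_{ℓ∞^k} → S⁺_{X_k} with ω_F(1/d) ≤ ε/8, one has ‖F(z(m̄)) − (1/ψ(k))·∑_{i=1}^k e_i‖ ≤ ε. -/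
/-- `ψ(k) = ‖∑_{i=1}^k e_i‖`. -/
noncomputable def psi {X : Type*} [NormedAddCommGroup X] (e : ℕ → X) (k : ℕ) : ℝ :=
  ‖∑ i ∈ Finset.Icc 1 k, e i‖

/-- `ψ_P(k) = min(‖∑_{i ≤ k, i ∈ P} e_i‖, ‖∑_{i ≤ k, i ∉ P} e_i‖)`. -/
noncomputable def psiP {X : Type*} [NormedAddCommGroup X] (e : ℕ → X) (P : Set ℕ)
    (k : ℕ) : ℝ :=
  min ‖∑ i ∈ Finset.Icc 1 k, Set.indicator P e i‖
      ‖∑ i ∈ Finset.Icc 1 k, Set.indicator Pᶜ e i‖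

/-- The vector `z(m̄) = ∑_{s=1}^d (1 - (s-1)/d)·1_{(m_{s-1}, m_s]}` in `ℝ^k`, where
coordinate `i : Fin k` corresponds to the index `i+1 ∈ {1,…,k}`. -/
noncomputable def zVec (d k : ℕ) (m : ℕ → ℕ) : Fin k → ℝ :=
  fun i => ∑ s ∈ Finset.Icc 1 d, (1 - ((s : ℝ) - 1) / (d : ℝ)) *
    (if m (s - 1) ≤ (i : ℕ) ∧ (i : ℕ) < m s then 1 else 0)

/-!
Write `z = 1 - lev / d`, where `lev i` is the number of the block containing `i`. A step
preserving `F` sends `z` to a vector `a ∘ lev`. Raising the level by one off a set `A` moves `z`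
by at most `1 / d`, and `F` sends the perturbed vector to one which agrees with some `b ∘ lev` on
`A` and with `b ∘ (lev + 1)` off `A`. On `A` this bounds `a - b`, block by block. Since `ψ` grows
so fast that the part of each block lying in `A` outweighs everything before it, the bound carries
over, with a small factor `θ`, to `|a (r + 1) - b (r + 1)|` on the whole of block `r`; comparing
off `A` then bounds the jumps `|a r - a (r + 1)|` off `A`. Exchanging `A` and `Aᶜ` bounds all the
jumps. Finally `a r - a d` is the `r`-th jump plus `a (r + 1) - a d`, and the same domination
bounds the last term by `θ` times the norm of `a ∘ lev - a d`, which is absorbed.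
-/

open Finset Function

section RpowSums

variable {ι : Type*} {p q : ℝ}

theorem rpow_sum_rpow_le_card_rpow_mul (hq : 0 < q) (hqp : q ≤ p) {s : Finset ι} {x : ι → ℝ}
    (hx : ∀ i ∈ s, 0 ≤ x i) :
    (∑ i ∈ s, x i ^ q) ^ (1 / q) ≤
      (#s : ℝ) ^ (1 / q - 1 / p) * (∑ i ∈ s, x i ^ p) ^ (1 / p) := by
  have hp : 0 < p := hq.trans_le hqp
  have hsum (r : ℝ) : 0 ≤ ∑ i ∈ s, x i ^ r := sum_nonneg fun i hi => Real.rpow_nonneg (hx i hi) r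
  have hpow : (∑ i ∈ s, x i ^ q) ^ (p / q) ≤ (#s : ℝ) ^ (p / q - 1) * ∑ i ∈ s, x i ^ p := by
    refine (Real.rpow_sum_le_const_mul_sum_rpow_of_nonneg s ((one_le_div hq).2 hqp)
      fun i hi => Real.rpow_nonneg (hx i hi) q).trans_eq ?_
    congr 1
    refine sum_congr rfl fun i hi => ?_
    rw [← Real.rpow_mul (hx i hi), mul_div_cancel₀ p hq.ne']
  calc (∑ i ∈ s, x i ^ q) ^ (1 / q)
      = ((∑ i ∈ s, x i ^ q) ^ (p / q)) ^ (1 / p) := by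
        rw [← Real.rpow_mul (hsum q)]
        field_simp
    _ ≤ ((#s : ℝ) ^ (p / q - 1) * ∑ i ∈ s, x i ^ p) ^ (1 / p) := by
        gcongr
        exact Real.rpow_nonneg (hsum q) _
    _ = (#s : ℝ) ^ (1 / q - 1 / p) * (∑ i ∈ s, x i ^ p) ^ (1 / p) := by
        rw [Real.mul_rpow (by positivity) (hsum p), ← Real.rpow_mul (by positivity)]
        field_simp

theorem rpow_sum_rpow_le_mul (hq : 0 < q) (hqp : q ≤ p) {s : Finset ι} {x y : ι → ℝ} {θ : ℝ}
    (hθ : 0 ≤ θ) (hx : ∀ i ∈ s, 0 ≤ x i) (hy : ∀ i ∈ s, 0 ≤ y i)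
    (hxy : ∀ i ∈ s, (#s : ℝ) ^ (1 / q - 1 / p) * x i ≤ θ * y i) :
    (∑ i ∈ s, x i ^ q) ^ (1 / q) ≤ θ * (∑ i ∈ s, y i ^ p) ^ (1 / p) := by
  have hp : 0 < p := hq.trans_le hqp
  have rpow_sum_mul {c : ℝ} (hc : 0 ≤ c) {w : ι → ℝ} (hw : ∀ i ∈ s, 0 ≤ w i) :
      (∑ i ∈ s, (c * w i) ^ p) ^ (1 / p) = c * (∑ i ∈ s, w i ^ p) ^ (1 / p) := by
    rw [sum_congr rfl fun i hi => Real.mul_rpow hc (hw i hi), ← mul_sum,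
      Real.mul_rpow (Real.rpow_nonneg hc p) (sum_nonneg fun i hi => Real.rpow_nonneg (hw i hi) p),
      one_div, Real.rpow_rpow_inv hc hp.ne']
  have hcard : 0 ≤ (#s : ℝ) ^ (1 / q - 1 / p) := by positivity
  calc (∑ i ∈ s, x i ^ q) ^ (1 / q)
      ≤ (#s : ℝ) ^ (1 / q - 1 / p) * (∑ i ∈ s, x i ^ p) ^ (1 / p) :=
        rpow_sum_rpow_le_card_rpow_mul hq hqp hx
    _ = (∑ i ∈ s, ((#s : ℝ) ^ (1 / q - 1 / p) * x i) ^ p) ^ (1 / p) := (rpow_sum_mul hcard hx).symm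
    _ ≤ (∑ i ∈ s, (θ * y i) ^ p) ^ (1 / p) := by
        have hcx (i : ι) (hi : i ∈ s) := mul_nonneg hcard (hx i hi)
        refine Real.rpow_le_rpow (sum_nonneg fun i hi => Real.rpow_nonneg (hcx i hi) p)
          (sum_le_sum fun i hi => Real.rpow_le_rpow (hcx i hi) (hxy i hi) hp.le) (by positivity)
    _ = θ * (∑ i ∈ s, y i ^ p) ^ (1 / p) := rpow_sum_mul hθ hy

end RpowSums

section IntervalSums

variable {E : Type*} [AddCommMonoid E]

theorem sum_Icc_one_eq_sum_range_succ (f : ℕ → E) (n : ℕ) :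
    ∑ i ∈ Icc 1 n, f i = ∑ i ∈ range n, f (i + 1) := by
  rw [range_eq_Ico, sum_Ico_add' f 0 n 1]
  rfl

theorem sum_range_sum_Ico {M : ℕ → ℕ} {N : ℕ} (hM : MonotoneOn M (Set.Iic N)) (f : ℕ → E) :
    ∑ r ∈ range N, ∑ i ∈ Ico (M r) (M (r + 1)), f i = ∑ i ∈ Ico (M 0) (M N), f i := by
  induction N with
  | zero => simp
  | succ N ih =>
    rw [sum_range_succ, ih (hM.mono (Set.Iic_subset_Iic.2 N.le_succ)),
      sum_Ico_consecutive _ (hM (by simp) (by simp) N.zero_le) (hM (by simp) (by simp) N.le_succ)]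

end IntervalSums

section BlockIndex

/-- The number `r ≤ d` of the block containing `i`, where the blocks are the intervals
`[M r, M (r + 1))` for `r < d` and `[M d, ∞)`. -/
def blockIndex (M : ℕ → ℕ) (d i : ℕ) : ℕ :=
  Nat.findGreatest (M · ≤ i) d

variable {M : ℕ → ℕ} {d i r : ℕ}

theorem blockIndex_le (M : ℕ → ℕ) (d i : ℕ) : blockIndex M d i ≤ d :=
  Nat.findGreatest_le d

theorem blockIndex_eq_iff (hM : MonotoneOn M (Set.Iic (d + 1))) (hM0 : M 0 = 0) (hr : r ≤ d)
    (hi : i < M (d + 1)) : blockIndex M d i = r ↔ M r ≤ i ∧ i < M (r + 1) := by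
  rw [blockIndex, Nat.findGreatest_eq_iff]
  constructor
  · rintro ⟨-, hle, hlt⟩
    refine ⟨?_, ?_⟩
    · rcases eq_or_ne r 0 with rfl | hr0
      · omega
      · exact hle hr0
    · rcases hr.eq_or_lt with rfl | hrd
      · exact hi
      · exact not_le.1 (hlt r.lt_succ_self hrd)
  · rintro ⟨hle, hlt⟩
    refine ⟨hr, fun _ => hle, fun n hrn hnd => not_le.2 (hlt.trans_le ?_)⟩
    exact hM (Nat.succ_le_succ hr) (hnd.trans d.le_succ) hrn

theorem blockIndex_of_mem_Ico (hM : MonotoneOn M (Set.Iic (d + 1))) (hM0 : M 0 = 0) (hr : r ≤ d)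
    (hi : i ∈ Ico (M r) (M (r + 1))) : blockIndex M d i = r := by
  rw [Finset.mem_Ico] at hi
  have hle : M (r + 1) ≤ M (d + 1) :=
    hM (Nat.succ_le_succ hr) Set.self_mem_Iic (Nat.succ_le_succ hr)
  exact (blockIndex_eq_iff hM hM0 hr (hi.2.trans_le hle)).2 hi

theorem blockIndex_lt_iff (hM0 : M 0 = 0) : blockIndex M d i < d ↔ i < M d := by
  rw [(blockIndex_le M d i).lt_iff_ne, ← not_le, not_iff_not, blockIndex, Nat.findGreatest_eq_iff]
  refine ⟨fun h => ?_, fun h => ⟨le_rfl, fun _ => h, fun n hdn hnd => by omega⟩⟩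
  rcases eq_or_ne d 0 with rfl | hd
  · omega
  · exact h.2.1 hd

theorem exists_strictMonoOn_Iic_succ {m : ℕ → ℕ} {d k : ℕ} (hm : ∀ s < d, m s < m (s + 1))
    (hk : m d < k) :
    ∃ M : ℕ → ℕ, StrictMonoOn M (Set.Iic (d + 1)) ∧ M (d + 1) = k ∧ ∀ s ≤ d, M s = m s := by
  have hagree (s : ℕ) (hs : s ≤ d) : update m (d + 1) k s = m s := update_of_ne (by omega) _ _
  refine ⟨update m (d + 1) k, strictMonoOn_Iic_of_lt_succ fun s hs => ?_, update_self _ _ _, hagree⟩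
  rcases (Nat.lt_succ_iff.1 hs).lt_or_eq with hsd | rfl
  · rw [hagree s hsd.le, Order.succ_eq_add_one, hagree (s + 1) hsd]
    exact hm s hsd
  · rwa [hagree s le_rfl, Order.succ_eq_add_one, update_self]

end BlockIndex

section AssumptionA

variable {X : Type*} [NormedAddCommGroup X] {e : ℕ → X} {P : Set ℕ} {kseq : ℕ → ℕ} {p q : ℝ}
  {d : ℕ} {η : ℝ}

/-- Assumption A(d, η) on the set `P` and the set `M = {kseq 1 < kseq 2 < …}`, which is enumerated
from `1`. -/
structure AssumptionA (e : ℕ → X) (P : Set ℕ) (kseq : ℕ → ℕ) (p q : ℝ) (d : ℕ) (η : ℝ) :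
    Prop where
  lt_succ : ∀ j, 1 ≤ j → kseq j < kseq (j + 1)
  le_psiP : ∀ k, (psi e k - 1) / 2 ≤ psiP e P k
  meets : ∀ j, 1 ≤ j → (∃ i, kseq j < i ∧ i ≤ kseq (j + 1) ∧ i ∈ P) ∧
    ∃ i, kseq j < i ∧ i ≤ kseq (j + 1) ∧ i ∉ P
  growth : ∀ j, 1 ≤ j → (8 * (d : ℝ) ^ ((1 : ℝ) / q - 1 / p) / η + 2) * psi e (kseq j) + 1 ≤
    psi e (kseq (j + 1))

namespace AssumptionA

theorem compl (hA : AssumptionA e P kseq p q d η) : AssumptionA e Pᶜ kseq p q d η where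
  lt_succ := hA.lt_succ
  le_psiP k := by simpa only [psiP, compl_compl, min_comm] using hA.le_psiP k
  meets j hj := by simpa only [Set.mem_compl_iff, not_not] using (hA.meets j hj).symm
  growth := hA.growth

theorem strictMonoOn (hA : AssumptionA e P kseq p q d η) : StrictMonoOn kseq (Set.Ici 1) :=
  strictMonoOn_of_lt_succ Set.ordConnected_Ici fun j _ hj _ => hA.lt_succ j hj

theorem exists_mem_blockIndex_eq_zero (hA : AssumptionA e P kseq p q d η) {M : ℕ → ℕ}
    (hM : MonotoneOn M (Set.Iic (d + 1))) (hM0 : M 0 = 0) (hM1 : ∃ j, 2 ≤ j ∧ M 1 = kseq j) :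
    ∃ i : Fin (M (d + 1)), (i + 1 : ℕ) ∈ P ∧ blockIndex M d i = 0 := by
  obtain ⟨j, hj, hMj⟩ := hM1
  obtain ⟨l, rfl⟩ := Nat.exists_eq_add_of_le' (one_le_two.trans hj)
  obtain ⟨i, hli, hil, hiP⟩ := (hA.meets l (Nat.le_of_succ_le_succ hj)).1
  obtain ⟨n, rfl⟩ := Nat.exists_eq_succ_of_ne_zero (Nat.ne_zero_of_lt hli)
  have hn : n < M 1 := hMj ▸ hil
  have hle : M 1 ≤ M (d + 1) := hM (by simp) Set.self_mem_Iic (by simp)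
  refine ⟨⟨n, hn.trans_le hle⟩, hiP, blockIndex_of_mem_Ico hM hM0 d.zero_le ?_⟩
  exact Finset.mem_Ico.2 ⟨hM0.le.trans n.zero_le, hn⟩

end AssumptionA

end AssumptionA

section Sequences

variable {X : Type*} [NormedAddCommGroup X] [NormedSpace ℝ X] {I J : Type*} {p q θ : ℝ}

/-- A family of vectors is `1`-unconditional if the norm of a finite linear combination is
monotone in the absolute values of the coefficients. -/
def IsOneUnconditional (e : I → X) : Prop :=
  ∀ (s : Finset I) (a b : I → ℝ), (∀ i ∈ s, |a i| ≤ |b i|) →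
    ‖∑ i ∈ s, a i • e i‖ ≤ ‖∑ i ∈ s, b i • e i‖

/-- Lower `p` and upper `q` estimates with constant one on block sequences: `x i` ranges over
vectors supported on the consecutive intervals `[s i, s (i + 1))`. -/
def HasBlockEstimates (p q : ℝ) (e : ℕ → X) : Prop :=
  ∀ (N : ℕ) (x : ℕ → X) (s : ℕ → ℕ),
    (∀ i, i < N → s i < s (i + 1)) →
    (∀ i, i < N → x i ∈ Submodule.span ℝ (e '' {j | s i ≤ j ∧ j < s (i + 1)})) →
    (∑ i ∈ range N, ‖x i‖ ^ p) ^ (1 / p) ≤ ‖∑ i ∈ range N, x i‖ ∧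
      ‖∑ i ∈ range N, x i‖ ≤ (∑ i ∈ range N, ‖x i‖ ^ q) ^ (1 / q)

namespace IsOneUnconditional

theorem comp_injective {e : I → X} (he : IsOneUnconditional e) {φ : J → I} (hφ : Injective φ) :
    IsOneUnconditional (e ∘ φ) := by
  intro s a b hab
  have key := he (s.map ⟨φ, hφ⟩) (extend φ a 0) (extend φ b 0)
    (by simpa [hφ.extend_apply] using hab)
  simpa [hφ.extend_apply] using key

variable {e : I → X} {s t : Finset I} {a b c : I → ℝ}

theorem norm_sum_le_of_subset (he : IsOneUnconditional e) (hst : s ⊆ t)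
    (hab : ∀ i ∈ s, |a i| ≤ |b i|) : ‖∑ i ∈ s, a i • e i‖ ≤ ‖∑ i ∈ t, b i • e i‖ := by
  classical
  calc ‖∑ i ∈ s, a i • e i‖ = ‖∑ i ∈ t, (if i ∈ s then a i else 0) • e i‖ := by
        simp only [ite_smul, zero_smul, sum_ite_mem, inter_eq_right.2 hst]
    _ ≤ ‖∑ i ∈ t, b i • e i‖ := he t _ _ fun i _ => by
        split_ifs with hi
        · exact hab i hi
        · simp

theorem norm_sum_le_add (he : IsOneUnconditional e) (h : ∀ i ∈ s, |c i| ≤ |a i| + |b i|) :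
    ‖∑ i ∈ s, c i • e i‖ ≤ ‖∑ i ∈ s, a i • e i‖ + ‖∑ i ∈ s, b i • e i‖ :=
  calc ‖∑ i ∈ s, c i • e i‖ ≤ ‖∑ i ∈ s, (|a i| + |b i|) • e i‖ :=
        he s _ _ fun i hi => (h i hi).trans (le_abs_self _)
    _ ≤ ‖∑ i ∈ s, |a i| • e i‖ + ‖∑ i ∈ s, |b i| • e i‖ := by
        simp only [add_smul, sum_add_distrib]
        exact norm_add_le _ _
    _ ≤ ‖∑ i ∈ s, a i • e i‖ + ‖∑ i ∈ s, b i • e i‖ :=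
        add_le_add (he s _ _ fun i _ => (abs_abs _).le) (he s _ _ fun i _ => (abs_abs _).le)

theorem norm_sum_mono (he : IsOneUnconditional e) (hst : s ⊆ t) :
    ‖∑ i ∈ s, e i‖ ≤ ‖∑ i ∈ t, e i‖ := by
  simpa only [one_smul] using
    he.norm_sum_le_of_subset hst (a := fun _ => 1) (b := fun _ => 1) fun _ _ => le_rfl

theorem norm_sum_indicator_le (he : IsOneUnconditional e) (A : Set I) (a : I → ℝ) :
    ‖∑ i ∈ s, A.indicator a i • e i‖ ≤ ‖∑ i ∈ s, a i • e i‖ :=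
  he s _ _ fun i _ => by simpa using norm_indicator_le_norm_self a i

end IsOneUnconditional

namespace HasBlockEstimates

variable {e : ℕ → X}

theorem comp_succ (he : HasBlockEstimates p q e) : HasBlockEstimates p q (e ∘ Nat.succ) := by
  intro N x s hs hx
  refine he N x (fun i => s i + 1) (fun i hi => Nat.succ_lt_succ (hs i hi)) fun i hi =>
    Submodule.span_mono ?_ (hx i hi)
  rintro _ ⟨j, ⟨hsj, hjs⟩, rfl⟩
  exact ⟨j + 1, ⟨Nat.succ_le_succ hsj, Nat.succ_lt_succ hjs⟩, rfl⟩

theorem norm_sum_Ico (he : HasBlockEstimates p q e) {M : ℕ → ℕ} {N : ℕ}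
    (hM : StrictMonoOn M (Set.Iic N)) (a : ℕ → ℝ) :
    (∑ r ∈ range N, ‖∑ i ∈ Ico (M r) (M (r + 1)), a i • e i‖ ^ p) ^ (1 / p) ≤
        ‖∑ i ∈ Ico (M 0) (M N), a i • e i‖ ∧
      ‖∑ i ∈ Ico (M 0) (M N), a i • e i‖ ≤
        (∑ r ∈ range N, ‖∑ i ∈ Ico (M r) (M (r + 1)), a i • e i‖ ^ q) ^ (1 / q) := by
  rw [← sum_range_sum_Ico hM.monotoneOn]
  refine he N _ M (fun r hr => hM hr.le (Nat.succ_le_of_lt hr) r.lt_succ_self) fun r _ =>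
    Submodule.sum_mem _ fun i hi => Submodule.smul_mem _ _ (Submodule.subset_span ?_)
  exact ⟨i, Finset.mem_Ico.1 hi, rfl⟩

end HasBlockEstimates

/-- Shifting block coefficients `u` by one block to the left, so that block `r < d` receives
`u (r + 1)`, costs at most the factor `θ` even when only the part in `A` of the vector with
coefficients `u ∘ lev` is counted. Here `lev i ≤ d` is the number of the block of `i`. -/
def ShiftBound [Fintype I] (e : I → X) (lev : I → ℕ) (d : ℕ) (A : Set I) (θ : ℝ) : Prop :=
  ∀ u : ℕ → ℝ, ‖∑ i with lev i < d, u (lev i + 1) • e i‖ ≤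
    θ * ‖∑ i, A.indicator (fun i => u (lev i)) i • e i‖

section Domination

variable {e : ℕ → X} {M : ℕ → ℕ} {d : ℕ} {A : Set ℕ}

theorem mul_norm_sum_block_succ_le (he : IsOneUnconditional e)
    (hM : MonotoneOn M (Set.Iic (d + 1))) (hM0 : M 0 = 0) {r : ℕ} (hr : r < d) {c : ℝ}
    (hc : 0 ≤ c) (hA : c * ‖∑ i ∈ range (M (r + 1)), e i‖ ≤
      θ * ‖∑ i ∈ Ico (M (r + 1)) (M (r + 2)), A.indicator e i‖) (u : ℕ → ℝ) :
    c * ‖∑ i ∈ Ico (M r) (M (r + 1)), u (blockIndex M d i + 1) • e i‖ ≤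
      θ * ‖∑ i ∈ Ico (M (r + 1)) (M (r + 2)),
        A.indicator (fun i => u (blockIndex M d i)) i • e i‖ := by
  have hleft : ∑ i ∈ Ico (M r) (M (r + 1)), u (blockIndex M d i + 1) • e i =
      u (r + 1) • ∑ i ∈ Ico (M r) (M (r + 1)), e i := by
    rw [smul_sum]
    exact sum_congr rfl fun i hi => by rw [blockIndex_of_mem_Ico hM hM0 hr.le hi]
  have hright : ∑ i ∈ Ico (M (r + 1)) (M (r + 2)),
      A.indicator (fun i => u (blockIndex M d i)) i • e i =
      u (r + 1) • ∑ i ∈ Ico (M (r + 1)) (M (r + 2)), A.indicator e i := by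
    rw [smul_sum]
    refine sum_congr rfl fun i hi => ?_
    by_cases hiA : i ∈ A <;> simp [hiA, blockIndex_of_mem_Ico hM hM0 hr hi]
  have hprefix : ‖∑ i ∈ Ico (M r) (M (r + 1)), e i‖ ≤ ‖∑ i ∈ range (M (r + 1)), e i‖ :=
    he.norm_sum_mono fun i hi => Finset.mem_range.2 (Finset.mem_Ico.1 hi).2
  rw [hleft, hright, norm_smul, norm_smul, mul_left_comm, mul_left_comm θ]
  exact mul_le_mul_of_nonneg_left ((mul_le_mul_of_nonneg_left hprefix hc).trans hA) (norm_nonneg _)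

theorem norm_sum_blockIndex_succ_le (he : IsOneUnconditional e) (hb : HasBlockEstimates p q e)
    (hq : 0 < q) (hqp : q ≤ p) (hθ : 0 ≤ θ) (hM : StrictMonoOn M (Set.Iic (d + 1)))
    (hM0 : M 0 = 0)
    (hA : ∀ r < d, (d : ℝ) ^ (1 / q - 1 / p) * ‖∑ i ∈ range (M (r + 1)), e i‖ ≤
      θ * ‖∑ i ∈ Ico (M (r + 1)) (M (r + 2)), A.indicator e i‖) (u : ℕ → ℝ) :
    ‖∑ i ∈ range (M d), u (blockIndex M d i + 1) • e i‖ ≤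
      θ * ‖∑ i ∈ range (M (d + 1)), A.indicator (fun i => u (blockIndex M d i)) i • e i‖ := by
  set lev := blockIndex M d
  have hupper := (hb.norm_sum_Ico (hM.mono (Set.Iic_subset_Iic.2 d.le_succ))
    fun i => u (lev i + 1)).2
  have hlower := (hb.norm_sum_Ico (M := fun r => M (r + 1)) (N := d)
    (fun r hr s hs hrs => hM (Nat.succ_le_succ hr) (Nat.succ_le_succ hs) (Nat.succ_lt_succ hrs))
    (A.indicator fun i => u (lev i))).1
  have hblock : ∀ r ∈ range d, (#(range d) : ℝ) ^ (1 / q - 1 / p) *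
      ‖∑ i ∈ Ico (M r) (M (r + 1)), u (lev i + 1) • e i‖ ≤
      θ * ‖∑ i ∈ Ico (M (r + 1)) (M (r + 2)), A.indicator (fun i => u (lev i)) i • e i‖ := by
    intro r hr
    rw [card_range]
    rw [Finset.mem_range] at hr
    exact mul_norm_sum_block_succ_le he hM.monotoneOn hM0 hr (by positivity) (hA r hr) u
  calc ‖∑ i ∈ range (M d), u (lev i + 1) • e i‖
      = ‖∑ i ∈ Ico (M 0) (M d), u (lev i + 1) • e i‖ := by rw [hM0, range_eq_Ico]
    _ ≤ _ := hupper
    _ ≤ _ := rpow_sum_rpow_le_mul hq hqp hθ (fun _ _ => norm_nonneg _) (fun _ _ => norm_nonneg _)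
        hblock
    _ ≤ _ := mul_le_mul_of_nonneg_left hlower hθ
    _ ≤ _ := mul_le_mul_of_nonneg_left (he.norm_sum_le_of_subset (fun i hi =>
        Finset.mem_range.2 (Finset.mem_Ico.1 hi).2) fun _ _ => le_rfl) hθ

theorem shiftBound_blockIndex (he : IsOneUnconditional e) (hb : HasBlockEstimates p q e)
    (hq : 0 < q) (hqp : q ≤ p) (hθ : 0 ≤ θ) (hM : StrictMonoOn M (Set.Iic (d + 1)))
    (hM0 : M 0 = 0)
    (hA : ∀ r < d, (d : ℝ) ^ (1 / q - 1 / p) * ‖∑ i ∈ range (M (r + 1)), e i‖ ≤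
      θ * ‖∑ i ∈ Ico (M (r + 1)) (M (r + 2)), A.indicator e i‖) :
    ShiftBound (fun i : Fin (M (d + 1)) => e i) (fun i => blockIndex M d i) d
      ((↑) ⁻¹' A) θ := by
  intro u
  have hfilter : {i ∈ range (M (d + 1)) | blockIndex M d i < d} = range (M d) := by
    have hMd : M d < M (d + 1) := hM d.le_succ Set.self_mem_Iic d.lt_succ_self
    ext i
    simp only [Finset.mem_filter, Finset.mem_range, blockIndex_lt_iff hM0]
    omega
  have hleft : ∑ i : Fin (M (d + 1)) with blockIndex M d i.val < d, u (blockIndex M d i + 1) • e i =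
      ∑ i ∈ range (M d), u (blockIndex M d i + 1) • e i := by
    rw [sum_filter, Fin.sum_univ_eq_sum_range (fun i => if blockIndex M d i < d then
      u (blockIndex M d i + 1) • e i else 0), ← sum_filter, hfilter]
  have hright := Fin.sum_univ_eq_sum_range
    (fun i => A.indicator (fun i => u (blockIndex M d i)) i • e i) (M (d + 1))
  rw [hleft]
  exact (norm_sum_blockIndex_succ_le he hb hq hqp hθ hM hM0 hA u).trans_eq (by rw [← hright]; rfl)

end Domination

open Classical in
/-- The level function `lev` raised by one off `A`, but never above `d`. -/
noncomputable def stagger (d : ℕ) (A : Set I) (lev : I → ℕ) (i : I) : ℕ :=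
  if i ∈ A then lev i else min (lev i + 1) d

section Stagger

variable {d : ℕ} {A : Set I} {lev : I → ℕ} {i : I}

theorem stagger_of_mem (hi : i ∈ A) : stagger d A lev i = lev i :=
  if_pos hi

theorem stagger_of_notMem_of_lt (hi : i ∉ A) (hlt : lev i < d) :
    stagger d A lev i = lev i + 1 :=
  (if_neg hi).trans (min_eq_left hlt)

theorem stagger_le (hlev : lev i ≤ d) : stagger d A lev i ≤ d := by
  rw [stagger]
  split_ifs
  exacts [hlev, min_le_right _ _]

theorem le_stagger (hlev : lev i ≤ d) : lev i ≤ stagger d A lev i := by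
  rw [stagger]
  split_ifs
  exacts [le_rfl, le_min (Nat.le_succ _) hlev]

theorem stagger_le_succ : stagger d A lev i ≤ lev i + 1 := by
  rw [stagger]
  split_ifs
  exacts [Nat.le_succ _, min_le_left _ _]

end Stagger

section Jumps

variable [Fintype I] {e : I → X} {lev : I → ℕ} {d : ℕ} {A : Set I}

theorem ShiftBound.norm_sum_compl_jumps_le (hA : ShiftBound e lev d A θ)
    (he : IsOneUnconditional e) (hθ : 0 ≤ θ) (a b : ℕ → ℝ) :
    ‖∑ i with lev i < d, Aᶜ.indicator (fun i => a (lev i) - a (lev i + 1)) i • e i‖ ≤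
      (1 + θ) * ‖∑ i, (a (lev i) - b (stagger d A lev i)) • e i‖ := by
  set y : I → ℝ := fun i => a (lev i) - b (stagger d A lev i) with hy
  have hpointwise : ∀ i ∈ ({i | lev i < d} : Finset I),
      |Aᶜ.indicator (fun i => a (lev i) - a (lev i + 1)) i| ≤
        |y i| + |b (lev i + 1) - a (lev i + 1)| := by
    intro i hi
    by_cases hiA : i ∈ A
    · rw [Set.indicator_of_notMem (Set.notMem_compl_iff.2 hiA), abs_zero]
      positivity
    · rw [Set.indicator_of_mem hiA, hy]
      simp only [stagger_of_notMem_of_lt hiA (mem_filter.1 hi).2]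
      exact abs_sub_le _ _ _
  have hshifted : ‖∑ i with lev i < d, (b (lev i + 1) - a (lev i + 1)) • e i‖ ≤
      θ * ‖∑ i, y i • e i‖ := by
    refine (hA fun r => b r - a r).trans (mul_le_mul_of_nonneg_left (he _ _ _ fun i _ => ?_) hθ)
    by_cases hiA : i ∈ A
    · rw [Set.indicator_of_mem hiA, hy]
      simp only [stagger_of_mem hiA, abs_sub_comm, le_rfl]
    · rw [Set.indicator_of_notMem hiA, abs_zero]
      positivity
  calc _ ≤ ‖∑ i with lev i < d, y i • e i‖ +
        ‖∑ i with lev i < d, (b (lev i + 1) - a (lev i + 1)) • e i‖ :=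
        he.norm_sum_le_add hpointwise
    _ ≤ ‖∑ i, y i • e i‖ + θ * ‖∑ i, y i • e i‖ :=
        add_le_add (he.norm_sum_le_of_subset (filter_subset _ _) fun _ _ => le_rfl) hshifted
    _ = (1 + θ) * ‖∑ i, y i • e i‖ := by ring

theorem norm_sum_jumps_le (he : IsOneUnconditional e) (hθ : 0 ≤ θ)
    (hA : ShiftBound e lev d A θ) (hAc : ShiftBound e lev d Aᶜ θ) (a b c : ℕ → ℝ) :
    ‖∑ i with lev i < d, (a (lev i) - a (lev i + 1)) • e i‖ ≤
      (1 + θ) * (‖∑ i, (a (lev i) - b (stagger d A lev i)) • e i‖ +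
        ‖∑ i, (a (lev i) - c (stagger d Aᶜ lev i)) • e i‖) := by
  have hon := hAc.norm_sum_compl_jumps_le he hθ a c
  have hoff := hA.norm_sum_compl_jumps_le he hθ a b
  rw [compl_compl] at hon
  have hsplit (i : I) : a (lev i) - a (lev i + 1) =
      Aᶜ.indicator (fun i => a (lev i) - a (lev i + 1)) i +
        A.indicator (fun i => a (lev i) - a (lev i + 1)) i :=
    (Set.indicator_compl_add_self_apply A (fun i => a (lev i) - a (lev i + 1)) i).symm
  rw [sum_congr rfl fun i _ => congrArg (· • e i) (hsplit i)]
  simp only [add_smul, sum_add_distrib]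
  exact (norm_add_le_of_le hoff hon).trans_eq (mul_add _ _ _).symm

theorem norm_sum_sub_last_le (he : IsOneUnconditional e) (hθ : 0 ≤ θ) (hlev : ∀ i, lev i ≤ d)
    (hA : ShiftBound e lev d A θ) (a : ℕ → ℝ) :
    (1 - θ) * ‖∑ i, (a (lev i) - a d) • e i‖ ≤
      ‖∑ i with lev i < d, (a (lev i) - a (lev i + 1)) • e i‖ := by
  have hrestrict : ∑ i, (a (lev i) - a d) • e i =
      ∑ i with lev i < d, (a (lev i) - a d) • e i := by
    refine (sum_filter_of_ne fun i _ hne => (hlev i).lt_of_ne fun hid => hne ?_).symm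
    rw [hid, sub_self, zero_smul]
  have hsplit : ∑ i with lev i < d, (a (lev i) - a d) • e i =
      ∑ i with lev i < d, (a (lev i) - a (lev i + 1)) • e i +
        ∑ i with lev i < d, (a (lev i + 1) - a d) • e i := by
    simp only [← sum_add_distrib, ← add_smul, sub_add_sub_cancel]
  have hshifted : ‖∑ i with lev i < d, (a (lev i + 1) - a d) • e i‖ ≤
      θ * ‖∑ i, (a (lev i) - a d) • e i‖ :=
    (hA fun r => a r - a d).trans
      (mul_le_mul_of_nonneg_left (he.norm_sum_indicator_le _ _) hθ)
  have htriangle := norm_add_le (∑ i with lev i < d, (a (lev i) - a (lev i + 1)) • e i)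
    (∑ i with lev i < d, (a (lev i + 1) - a d) • e i)
  rw [← hsplit, ← hrestrict] at htriangle
  linarith

end Jumps

theorem norm_inv_norm_smul_self_le (u : X) : ‖‖u‖⁻¹ • u‖ ≤ 1 := by
  rw [norm_smul, norm_inv, norm_norm]
  exact inv_mul_le_one

theorem norm_sub_inv_norm_smul_le {x u : X} (hx : ‖x‖ = 1) {t : ℝ} (ht : 0 ≤ t) :
    ‖x - ‖u‖⁻¹ • u‖ ≤ 2 * ‖x - t • u‖ := by
  rcases eq_or_ne u 0 with rfl | hu
  · simp [hx]
  have hnormalize : ‖t • u - ‖u‖⁻¹ • u‖ = |‖t • u‖ - ‖x‖| := by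
    rw [← sub_smul, norm_smul, Real.norm_eq_abs, hx, norm_smul, Real.norm_of_nonneg ht,
      ← abs_norm u, ← abs_mul, abs_norm, sub_mul, inv_mul_cancel₀ (norm_ne_zero_iff.2 hu)]
  calc ‖x - ‖u‖⁻¹ • u‖
      ≤ ‖x - t • u‖ + ‖t • u - ‖u‖⁻¹ • u‖ := norm_sub_le_norm_sub_add_norm_sub _ _ _
    _ ≤ ‖x - t • u‖ + ‖x - t • u‖ := by
        rw [hnormalize, norm_sub_rev x]
        gcongr
        exact abs_norm_sub_norm_le _ _
    _ = 2 * ‖x - t • u‖ := (two_mul _).symm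

section LevelVectors

variable {k d : ℕ} {L L' : Fin k → ℕ}

/-- The vector with entries in `{0, 1/d, …, 1}` taking the value `1 - r/d` on the level set
`L = r`; the vectors `z(m̄)` and their perturbations have this form. -/
noncomputable def levelVec (d : ℕ) (L : Fin k → ℕ) (i : Fin k) : ℝ :=
  1 - L i / d

theorem levelVec_nonneg (hL : ∀ i, L i ≤ d) (i : Fin k) : 0 ≤ levelVec d L i :=
  sub_nonneg.2 (div_le_one_of_le₀ (by exact_mod_cast hL i) d.cast_nonneg)

theorem supNorm_levelVec (hL : ∀ i, L i ≤ d) (hL0 : ∃ i, L i = 0) :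
    supNorm (levelVec d L) = 1 := by
  apply le_antisymm
  · refine Real.iSup_le (fun i => ?_) zero_le_one
    rw [abs_of_nonneg (levelVec_nonneg hL i), levelVec, sub_le_self_iff]
    positivity
  · obtain ⟨i, hi⟩ := hL0
    have hle := le_ciSup (Set.finite_range fun j => |levelVec d L j|).bddAbove i
    simpa [levelVec, hi, supNorm] using hle

theorem supNorm_levelVec_sub_le (hle : ∀ i, L i ≤ L' i) (hle' : ∀ i, L' i ≤ L i + 1) :
    supNorm (levelVec d L - levelVec d L') ≤ 1 / (d : ℝ) := by
  refine Real.iSup_le (fun i => ?_) (by positivity)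
  have h : (L i : ℝ) ≤ L' i := by exact_mod_cast hle i
  have h' : (L' i : ℝ) ≤ L i + 1 := by exact_mod_cast hle' i
  rw [Pi.sub_apply, levelVec, levelVec, sub_sub_sub_cancel_left, ← sub_div,
    abs_of_nonneg (div_nonneg (sub_nonneg.2 h) d.cast_nonneg)]
  gcongr
  linarith

theorem zVec_eq_levelVec {M : ℕ → ℕ} (hd : 0 < d) (hM : MonotoneOn M (Set.Iic (d + 1)))
    (hM0 : M 0 = 0) :
    zVec d (M (d + 1)) M = levelVec d fun i => blockIndex M d i := by
  funext i
  have hterm : ∀ s ∈ Icc 1 d, (1 - ((s : ℝ) - 1) / d) *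
      (if M (s - 1) ≤ (i : ℕ) ∧ (i : ℕ) < M s then 1 else 0) =
      if s = blockIndex M d i + 1 then 1 - (blockIndex M d i : ℝ) / d else 0 := by
    intro s hs
    obtain ⟨r, rfl⟩ := Nat.exists_eq_add_of_le' (Finset.mem_Icc.1 hs).1
    have hr := blockIndex_eq_iff hM hM0 (r := r) (by grind) i.isLt
    simp only [Nat.add_sub_cancel, ← hr, Nat.add_right_cancel_iff, eq_comm (a := r)]
    split_ifs with h
    · rw [h, Nat.cast_succ, add_sub_cancel_right, mul_one]
    · rw [mul_zero]
  rw [zVec, sum_congr rfl hterm, sum_ite_eq', levelVec]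
  split_ifs with hmem
  · rfl
  · have hlast : blockIndex M d i = d := by
      have := blockIndex_le M d i
      grind
    rw [hlast, div_self (by positivity), sub_self]

theorem supNorm_zVec {M : ℕ → ℕ} (hd : 0 < d) (hM : StrictMonoOn M (Set.Iic (d + 1)))
    (hM0 : M 0 = 0) : supNorm (zVec d (M (d + 1)) M) = 1 := by
  have hpos : 0 < M (d + 1) := hM0 ▸ hM (by simp) Set.self_mem_Iic d.succ_pos
  have hlt : M 0 < M 1 := hM (by simp) (by simp) one_pos
  rw [zVec_eq_levelVec hd hM.monotoneOn hM0]
  refine supNorm_levelVec (fun i => blockIndex_le M d i) ⟨⟨0, hpos⟩, ?_⟩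
  exact blockIndex_of_mem_Ico hM.monotoneOn hM0 d.zero_le
    (Finset.mem_Ico.2 ⟨hM0.le, hM0.symm.trans_lt hlt⟩)

theorem zVec_nonneg {M : ℕ → ℕ} (hd : 0 < d) (hM : MonotoneOn M (Set.Iic (d + 1)))
    (hM0 : M 0 = 0) (i : Fin (M (d + 1))) : 0 ≤ zVec d (M (d + 1)) M i := by
  rw [zVec_eq_levelVec hd hM hM0]
  exact levelVec_nonneg (fun i => blockIndex_le M d i) i

theorem zVec_congr {m m' : ℕ → ℕ} (h : ∀ s ≤ d, m s = m' s) : zVec d k m = zVec d k m' := by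
  funext i
  refine sum_congr rfl fun s hs => ?_
  have hsd := (Finset.mem_Icc.1 hs).2
  rw [h s hsd, h (s - 1) ((Nat.sub_le s 1).trans hsd)]

end LevelVectors

section StepPreserving

variable {k d : ℕ} {e : Fin k → X} {F : (Fin k → ℝ) → (Fin k → ℝ)} {δ : ℝ}

/-- `F`, read in coordinates with respect to `e`, maps the positive unit sphere of `ℓ∞^k` into the
positive unit sphere of the span of `e`. -/
def MapsPosSphere (e : Fin k → X) (F : (Fin k → ℝ) → (Fin k → ℝ)) : Prop :=
  ∀ x : Fin k → ℝ, supNorm x = 1 → (∀ i, 0 ≤ x i) →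
    ‖∑ i, F x i • e i‖ = 1 ∧ ∀ i, 0 ≤ F x i

/-- On the positive unit sphere, `F x` is constant wherever `x` is. -/
def IsStepPreserving (F : (Fin k → ℝ) → (Fin k → ℝ)) : Prop :=
  ∀ x : Fin k → ℝ, supNorm x = 1 → (∀ i, 0 ≤ x i) → ∀ i j, x i = x j → F x i = F x j

/-- The bound `ω_F(t) ≤ δ` on the modulus of uniform continuity of `F` on the positive unit
sphere. -/
def ModulusLE (e : Fin k → X) (F : (Fin k → ℝ) → (Fin k → ℝ)) (t δ : ℝ) : Prop :=
  ∀ x y : Fin k → ℝ, supNorm x = 1 → (∀ i, 0 ≤ x i) → supNorm y = 1 → (∀ i, 0 ≤ y i) →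
    supNorm (x - y) ≤ t → ‖∑ i, F x i • e i - ∑ i, F y i • e i‖ ≤ δ

theorem IsStepPreserving.exists_map_levelVec_eq (hF : IsStepPreserving F) {L : Fin k → ℕ}
    (hL : ∀ i, L i ≤ d) (hL0 : ∃ i, L i = 0) :
    ∃ b : ℕ → ℝ, ∀ i, F (levelVec d L) i = b (L i) := by
  have hfactors : FactorsThrough (F (levelVec d L)) L := fun i j hij =>
    hF _ (supNorm_levelVec hL hL0) (levelVec_nonneg hL) i j (by rw [levelVec, levelVec, hij])
  exact ⟨extend L (F (levelVec d L)) 0, fun i => (hfactors.extend_apply 0 i).symm⟩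

theorem exists_norm_sum_sub_stagger_le (hF : IsStepPreserving F)
    (hmod : ModulusLE e F (1 / d) δ) {lev : Fin k → ℕ} (hlev : ∀ i, lev i ≤ d) {A : Set (Fin k)}
    (hA0 : ∃ i ∈ A, lev i = 0) :
    ∃ b : ℕ → ℝ, ‖∑ i, (F (levelVec d lev) i - b (stagger d A lev i)) • e i‖ ≤ δ := by
  obtain ⟨i₀, hi₀A, hi₀⟩ := hA0
  have hstagger (i : Fin k) : stagger d A lev i ≤ d := stagger_le (hlev i)
  have hstagger0 : ∃ i, stagger d A lev i = 0 := ⟨i₀, (stagger_of_mem hi₀A).trans hi₀⟩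
  obtain ⟨b, hb⟩ := hF.exists_map_levelVec_eq hstagger hstagger0
  refine ⟨b, ?_⟩
  simp only [← hb, sub_smul, sum_sub_distrib]
  exact hmod _ _ (supNorm_levelVec hlev ⟨i₀, hi₀⟩) (levelVec_nonneg hlev)
    (supNorm_levelVec hstagger hstagger0) (levelVec_nonneg hstagger)
    (supNorm_levelVec_sub_le (fun i => le_stagger (hlev i)) fun _ => stagger_le_succ)

theorem norm_map_levelVec_sub_le (he : IsOneUnconditional e) (hθ0 : 0 ≤ θ) (hθ1 : θ ≤ 1)
    {lev : Fin k → ℕ} (hlev : ∀ i, lev i ≤ d) (hlast : ∃ i, lev i = d) {A : Set (Fin k)}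
    (hA : ShiftBound e lev d A θ) (hAc : ShiftBound e lev d Aᶜ θ)
    (hA0 : ∃ i ∈ A, lev i = 0) (hAc0 : ∃ i ∈ Aᶜ, lev i = 0)
    (hmaps : MapsPosSphere e F) (hF : IsStepPreserving F) (hmod : ModulusLE e F (1 / d) δ) :
    (1 - θ) * ‖∑ i, F (levelVec d lev) i • e i - ‖∑ i, e i‖⁻¹ • ∑ i, e i‖ ≤
      4 * (1 + θ) * δ := by
  have hlev0 : ∃ i, lev i = 0 := hA0.imp fun _ => And.right
  obtain ⟨hnorm, hnonneg⟩ := hmaps _ (supNorm_levelVec hlev hlev0) (levelVec_nonneg hlev)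
  obtain ⟨b, hb⟩ := exists_norm_sum_sub_stagger_le hF hmod hlev hA0
  obtain ⟨c, hc⟩ := exists_norm_sum_sub_stagger_le hF hmod hlev hAc0
  obtain ⟨a, ha⟩ := hF.exists_map_levelVec_eq hlev hlev0
  have had : 0 ≤ a d := by
    obtain ⟨i, hi⟩ := hlast
    rw [← hi, ← ha]
    exact hnonneg i
  have hconst : ‖∑ i, F (levelVec d lev) i • e i - ‖∑ i, e i‖⁻¹ • ∑ i, e i‖ ≤
      2 * ‖∑ i, (a (lev i) - a d) • e i‖ := by
    refine (norm_sub_inv_norm_smul_le hnorm had).trans_eq ?_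
    simp only [ha, smul_sum, sub_smul, sum_sub_distrib]
  simp only [ha] at hb hc hconst ⊢
  calc _ ≤ (1 - θ) * (2 * ‖∑ i, (a (lev i) - a d) • e i‖) :=
        mul_le_mul_of_nonneg_left hconst (sub_nonneg.2 hθ1)
    _ = 2 * ((1 - θ) * ‖∑ i, (a (lev i) - a d) • e i‖) := by ring
    _ ≤ 2 * ((1 + θ) * (δ + δ)) := by
        refine mul_le_mul_of_nonneg_left ((norm_sum_sub_last_le he hθ0 hlev hA a).trans
          ((norm_sum_jumps_le he hθ0 hA hAc a b c).trans ?_)) zero_le_two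
        exact mul_le_mul_of_nonneg_left (add_le_add hb hc) (by linarith)
    _ = 4 * (1 + θ) * δ := by ring

end StepPreserving

section Concentration

variable {e : ℕ → X} {P : Set ℕ} {kseq : ℕ → ℕ} {d : ℕ} {η : ℝ}

theorem IsOneUnconditional.monotone_psi (he : IsOneUnconditional e) : Monotone (psi e) :=
  fun _ _ hmn => he.norm_sum_mono (Icc_subset_Icc_right hmn)

theorem IsOneUnconditional.mul_psi_le_norm_sum_Ico (he : IsOneUnconditional e) {n N : ℕ}
    (hnN : n ≤ N) {c : ℝ} (hP : (psi e N - 1) / 2 ≤ ‖∑ i ∈ Icc 1 N, P.indicator e i‖)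
    (hgrow : (2 * c + 2) * psi e n + 1 ≤ psi e N) :
    c * psi e n ≤ ‖∑ i ∈ Ico n N, P.indicator e (i + 1)‖ := by
  have hprefix : ‖∑ i ∈ range n, P.indicator e (i + 1)‖ ≤ psi e n := by
    classical
    rw [← sum_Icc_one_eq_sum_range_succ, psi]
    simp only [Set.indicator_apply, ← sum_filter]
    exact he.norm_sum_mono (filter_subset _ _)
  have htriangle := norm_add_le (∑ i ∈ range n, P.indicator e (i + 1))
    (∑ i ∈ Ico n N, P.indicator e (i + 1))
  rw [sum_range_add_sum_Ico _ hnN, ← sum_Icc_one_eq_sum_range_succ] at htriangle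
  linarith

namespace AssumptionA

theorem rpow_mul_psi_le (hA : AssumptionA e P kseq p q d η) (he : IsOneUnconditional e)
    (hη : 0 < η) {a b : ℕ} (ha : 1 ≤ a) (hb : 1 ≤ b) (hab : kseq a < kseq b) :
    (d : ℝ) ^ (1 / q - 1 / p) * psi e (kseq a) ≤
      η / 4 * ‖∑ i ∈ Ico (kseq a) (kseq b), P.indicator e (i + 1)‖ := by
  set D : ℝ := (d : ℝ) ^ (1 / q - 1 / p)
  have hsucc : a + 1 ≤ b := (hA.strictMonoOn.lt_iff_lt ha hb).1 hab
  have hgrow : (2 * (4 * D / η) + 2) * psi e (kseq a) + 1 ≤ psi e (kseq b) :=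
    calc _ = (8 * D / η + 2) * psi e (kseq a) + 1 := by ring
      _ ≤ psi e (kseq (a + 1)) := hA.growth a ha
      _ ≤ psi e (kseq b) :=
        he.monotone_psi (hA.strictMonoOn.monotoneOn (ha.trans a.le_succ) hb hsucc)
  have key := he.mul_psi_le_norm_sum_Ico hab.le
    ((hA.le_psiP _).trans (min_le_left _ _)) hgrow
  calc D * psi e (kseq a) = η / 4 * (4 * D / η * psi e (kseq a)) := by field_simp
    _ ≤ _ := mul_le_mul_of_nonneg_left key (by positivity)

theorem shiftBound (hA : AssumptionA e P kseq p q d η) (he : IsOneUnconditional e)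
    (hb : HasBlockEstimates p q e) (hq : 0 < q) (hqp : q ≤ p) (hη : 0 < η) {M : ℕ → ℕ}
    (hM : StrictMonoOn M (Set.Iic (d + 1))) (hM0 : M 0 = 0)
    (hMk : ∀ r ≤ d, ∃ j, 1 ≤ j ∧ M (r + 1) = kseq j) :
    ShiftBound (fun i : Fin (M (d + 1)) => e (i + 1)) (fun i => blockIndex M d i) d
      {i | (i + 1 : ℕ) ∈ P} (η / 4) := by
  refine shiftBound_blockIndex (he.comp_injective Nat.succ_injective) hb.comp_succ hq hqp
    (by positivity) hM hM0 (A := Nat.succ ⁻¹' P) fun r hr => ?_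
  obtain ⟨a, ha, hMa⟩ := hMk r hr.le
  obtain ⟨b, hb1, hMb⟩ := hMk (r + 1) hr
  have hlt : M (r + 1) < M (r + 2) :=
    hM (Nat.succ_le_succ hr.le) (Nat.succ_le_succ hr) (Nat.lt_succ_self _)
  rw [hMa, hMb] at hlt ⊢
  simpa only [psi, sum_Icc_one_eq_sum_range_succ, Set.indicator_comp_right, comp_apply,
    Nat.succ_eq_add_one] using hA.rpow_mul_psi_le he hη ha hb1 hlt

theorem norm_map_zVec_sub_le (hA : AssumptionA e P kseq p q d η) (he : IsOneUnconditional e)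
    (hb : HasBlockEstimates p q e) (hd : 0 < d) (hq : 0 < q) (hqp : q ≤ p) (hη0 : 0 < η)
    (hη4 : η ≤ 4) {M : ℕ → ℕ} (hM : StrictMonoOn M (Set.Iic (d + 1))) (hM0 : M 0 = 0)
    (hMk : ∀ r ≤ d, ∃ j, 2 ≤ j ∧ M (r + 1) = kseq j)
    {F : (Fin (M (d + 1)) → ℝ) → (Fin (M (d + 1)) → ℝ)} {δ : ℝ}
    (hmaps : MapsPosSphere (fun i : Fin _ => e (i + 1)) F) (hF : IsStepPreserving F)
    (hmod : ModulusLE (fun i : Fin _ => e (i + 1)) F (1 / d) δ) :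
    (1 - η / 4) * ‖∑ i, F (zVec d (M (d + 1)) M) i • e (i + 1) -
      (psi e (M (d + 1)))⁻¹ • ∑ i ∈ Icc 1 (M (d + 1)), e i‖ ≤ 4 * (1 + η / 4) * δ := by
  have hMk1 (r : ℕ) (hr : r ≤ d) : ∃ j, 1 ≤ j ∧ M (r + 1) = kseq j :=
    (hMk r hr).imp fun _ => And.imp_left one_le_two.trans
  have hlast : ∃ i : Fin (M (d + 1)), blockIndex M d i = d := by
    have hlt : M d < M (d + 1) := hM d.le_succ Set.self_mem_Iic d.lt_succ_self
    exact ⟨⟨M d, hlt⟩, blockIndex_of_mem_Ico hM.monotoneOn hM0 le_rfl (by simpa using hlt)⟩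
  have hsum : ∑ i ∈ Icc 1 (M (d + 1)), e i = ∑ i : Fin (M (d + 1)), e (i + 1) := by
    rw [sum_Icc_one_eq_sum_range_succ, Fin.sum_univ_eq_sum_range fun i => e (i + 1)]
  rw [zVec_eq_levelVec hd hM.monotoneOn hM0, psi, hsum]
  exact norm_map_levelVec_sub_le (A := {i | (i + 1 : ℕ) ∈ P})
    (he.comp_injective (Nat.succ_injective.comp Fin.val_injective)) (by positivity) (by linarith)
    (fun i => blockIndex_le M d i) hlast
    (hA.shiftBound he hb hq hqp hη0 hM hM0 hMk1) (hA.compl.shiftBound he hb hq hqp hη0 hM hM0 hMk1)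
    (hA.exists_mem_blockIndex_eq_zero hM.monotoneOn hM0 (hMk 0 d.zero_le))
    (hA.compl.exists_mem_blockIndex_eq_zero hM.monotoneOn hM0 (hMk 0 d.zero_le)) hmaps hF hmod

end AssumptionA

end Concentration

end Sequences

theorem stmt_17_general {X : Type*} [NormedAddCommGroup X] [NormedSpace ℝ X]
    (d : ℕ) (hd : 1 ≤ d) (ε : ℝ) (hε0 : 0 < ε) (q p : ℝ) (hq : 0 < q) (hqp : q ≤ p)
    (e : ℕ → X) (he : IsOneUnconditional e) (hb : HasBlockEstimates p q e)
    (P : Set ℕ) (kseq : ℕ → ℕ) (hA : AssumptionA e P kseq p q d (ε / 4))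
    (m : ℕ → ℕ) (hm0 : m 0 = 0) (hmono : ∀ s, s < d → m s < m (s + 1))
    (hm : ∀ s, 1 ≤ s → s ≤ d → ∃ j, 2 ≤ j ∧ m s = kseq j)
    (k : ℕ) (hk : ∃ j, 2 ≤ j ∧ k = kseq j) (hkm : m d < k)
    (F : (Fin k → ℝ) → (Fin k → ℝ)) (hmaps : MapsPosSphere (fun i : Fin k => e (i + 1)) F)
    (hF : IsStepPreserving F) (hmod : ModulusLE (fun i : Fin k => e (i + 1)) F (1 / d) (ε / 8)) :
    ‖∑ i : Fin k, F (zVec d k m) i • e (i + 1) - (psi e k)⁻¹ • ∑ i ∈ Icc 1 k, e i‖ ≤ ε := by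
  obtain ⟨M, hM, rfl, hMm⟩ := exists_strictMonoOn_Iic_succ hmono hkm
  have hM0 : M 0 = 0 := (hMm 0 d.zero_le).trans hm0
  rw [← zVec_congr hMm]
  rcases le_total 2 ε with hε2 | hε2
  · have hnorm := (hmaps _ (supNorm_zVec hd hM hM0) (zVec_nonneg hd hM.monotoneOn hM0)).1
    have htriangle := norm_sub_le_of_le hnorm.le
      (norm_inv_norm_smul_self_le (∑ i ∈ Icc 1 (M (d + 1)), e i))
    exact htriangle.trans (one_add_one_eq_two.trans_le hε2)
  have hMk : ∀ r ≤ d, ∃ j, 2 ≤ j ∧ M (r + 1) = kseq j := fun r hr => by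
    rcases hr.lt_or_eq with hrd | rfl
    · exact hMm (r + 1) hrd ▸ hm (r + 1) r.succ_pos hrd
    · exact hk
  have hbound := hA.norm_map_zVec_sub_le he hb hd hq hqp (by positivity) (by linarith) hM hM0 hMk
    hmaps hF hmod
  refine le_of_mul_le_mul_left (hbound.trans ?_) (by linarith : 0 < 1 - ε / 4 / 4)
  nlinarith [mul_nonneg hε0.le (sub_nonneg.2 hε2)]

/-- Theorem 6.1 of the paper: concentration inequality for step preserving
maps `F : S⁺_{ℓ∞^k} → S⁺_{X_k}` under Assumption A(d, ε/4), along `Q = {k_{2j} : j ≥ 1}`. -/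
theorem stmt_17 {X : Type*} [NormedAddCommGroup X] [NormedSpace ℝ X]
    (d : ℕ) (hd : 1 ≤ d) (ε : ℝ) (hε0 : 0 < ε) (hε1 : ε ≤ 1)
    (q p : ℝ) (hq : 1 ≤ q) (hqp : q ≤ p)
    (e : ℕ → X)
    (hnorm : ∀ i, 1 ≤ i → ‖e i‖ = 1)
    (huncond : ∀ (s : Finset ℕ) (a b : ℕ → ℝ), (∀ i ∈ s, |a i| ≤ |b i|) →
      ‖∑ i ∈ s, a i • e i‖ ≤ ‖∑ i ∈ s, b i • e i‖)
    (hblock : ∀ (N : ℕ) (x : ℕ → X) (s : ℕ → ℕ),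
      (∀ i, i < N → s i < s (i + 1)) →
      (∀ i, i < N → x i ∈ Submodule.span ℝ (e '' {j | s i ≤ j ∧ j < s (i + 1)})) →
      (∑ i ∈ Finset.range N, ‖x i‖ ^ p) ^ (1 / p) ≤ ‖∑ i ∈ Finset.range N, x i‖ ∧
        ‖∑ i ∈ Finset.range N, x i‖ ≤ (∑ i ∈ Finset.range N, ‖x i‖ ^ q) ^ (1 / q))
    -- `P` and `M = {kseq 1 < kseq 2 < …}` satisfy Assumption A(d, ε/4):
    (P : Set ℕ) (kseq : ℕ → ℕ)
    (hkmono : ∀ j, 1 ≤ j → kseq j < kseq (j + 1))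
    (hA1 : ∀ k, (psi e k - 1) / 2 ≤ psiP e P k)
    (hA2 : ∀ j, 1 ≤ j → (∃ i, kseq j < i ∧ i ≤ kseq (j + 1) ∧ i ∈ P) ∧
      (∃ i, kseq j < i ∧ i ≤ kseq (j + 1) ∧ i ∉ P))
    (hA3 : ∀ j, 1 ≤ j →
      (8 * (d : ℝ) ^ ((1 : ℝ) / q - 1 / p) / (ε / 4) + 2) * psi e (kseq j) + 1 ≤
        psi e (kseq (j + 1)))
    -- `m̄ = (m_1 < … < m_d)` with entries in `Q = {kseq (2j) : j ≥ 1}`, and `k ∈ Q`: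
    (m : ℕ → ℕ) (hm0 : m 0 = 0)
    (hmono : ∀ s, s < d → m s < m (s + 1))
    (hmQ : ∀ s, 1 ≤ s → s ≤ d → ∃ j, 1 ≤ j ∧ m s = kseq (2 * j))
    (k : ℕ) (hkQ : ∃ j, 1 ≤ j ∧ k = kseq (2 * j)) (hkm : m d < k)
    -- `F : S⁺_{ℓ∞^k} → S⁺_{X_k}` is step preserving with `ω_F(1/d) ≤ ε/8`:
    (F : (Fin k → ℝ) → (Fin k → ℝ))
    (hFmaps : ∀ x : Fin k → ℝ, supNorm x = 1 → (∀ i, 0 ≤ x i) →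
      (‖∑ i : Fin k, F x i • e ((i : ℕ) + 1)‖ = 1 ∧ ∀ i, 0 ≤ F x i))
    (hstep : ∀ x : Fin k → ℝ, supNorm x = 1 → (∀ i, 0 ≤ x i) →
      ∀ i j, x i = x j → F x i = F x j)
    (homega : ∀ x y : Fin k → ℝ, supNorm x = 1 → (∀ i, 0 ≤ x i) →
      supNorm y = 1 → (∀ i, 0 ≤ y i) → supNorm (x - y) ≤ 1 / (d : ℝ) →
      ‖(∑ i : Fin k, F x i • e ((i : ℕ) + 1)) -
        ∑ i : Fin k, F y i • e ((i : ℕ) + 1)‖ ≤ ε / 8) :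
    ‖(∑ i : Fin k, F (zVec d k m) i • e ((i : ℕ) + 1)) -
      (psi e k)⁻¹ • ∑ i ∈ Finset.Icc 1 k, e i‖ ≤ ε :=
  stmt_17_general d hd ε hε0 q p (by linarith) hqp e huncond hblock P kseq
    ⟨hkmono, hA1, hA2, hA3⟩ m hm0 hmono
    (fun s hs1 hsd => let ⟨j, hj, hmj⟩ := hmQ s hs1 hsd; ⟨2 * j, by omega, hmj⟩)
    k (let ⟨j, hj, hkj⟩ := hkQ; ⟨2 * j, by omega, hkj⟩) hkm F hFmaps hstep homega
end
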